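/- Let A be a Nakayama algebra. For a simple module S let M_S = S if pd S < ∞ and M_S = IS otherwise, and let N_S = S if id S < ∞ and N_S = PS otherwise; set d = max over simple S of pd M_S and d' = max over simple S of id N_S. Then fin-pro A = fin-inj A = del A = des A = d = d'. -/

import Mathlib

open CategoryTheory CategoryTheory.Limits

noncomputable section

namespace ArtinAlg

variable (A : Type) [Ring A]

/-- `M` admits a projective resolution of length at most `n`. -/
inductive ProjDimLE : ℕ → ModuleCat.{0} A → Prop
  | zero (M : ModuleCat.{0} A) (h : Projective M) : ProjDimLE 0 M
  | succ (n : ℕ) (M P : ModuleCat.{0} A) (f : P ⟶ M) (hP : Projective P) (hf : Epi f)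
      (h : ProjDimLE n (kernel f)) : ProjDimLE (n + 1) M

/-- `M` admits an injective coresolution of length at most `n`. -/
inductive InjDimLE : ℕ → ModuleCat.{0} A → Prop
  | zero (M : ModuleCat.{0} A) (h : Injective M) : InjDimLE 0 M
  | succ (n : ℕ) (M I : ModuleCat.{0} A) (f : M ⟶ I) (hI : Injective I) (hf : Mono f)
      (h : InjDimLE n (cokernel f)) : InjDimLE (n + 1) M

/-- The projective dimension `pd M ∈ ℕ∞`. -/
def projDim (M : ModuleCat.{0} A) : ℕ∞ :=
  sInf {d : ℕ∞ | ∃ n : ℕ, d = n ∧ ProjDimLE A n M}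

/-- The injective dimension `id M ∈ ℕ∞`. -/
def injDim (M : ModuleCat.{0} A) : ℕ∞ :=
  sInf {d : ℕ∞ | ∃ n : ℕ, d = n ∧ InjDimLE A n M}

/-- `f : P ⟶ M` is a projective cover: `P` is projective and `f` is an essential
(superfluous) epimorphism. -/
def IsProjectiveCoverHom {P M : ModuleCat.{0} A} (f : P ⟶ M) : Prop :=
  Projective P ∧ Epi f ∧ ∀ (N : ModuleCat.{0} A) (g : N ⟶ P), Epi (g ≫ f) → Epi g

/-- `P` is a projective cover of `M`. -/
def IsProjCoverOf (M P : ModuleCat.{0} A) : Prop :=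
  ∃ f : P ⟶ M, IsProjectiveCoverHom A f

/-- `f : M ⟶ I` is an injective envelope: `I` is injective and `f` is an essential
monomorphism. -/
def IsInjectiveEnvelopeHom {M I : ModuleCat.{0} A} (f : M ⟶ I) : Prop :=
  Injective I ∧ Mono f ∧ ∀ (N : ModuleCat.{0} A) (g : I ⟶ N), Mono (f ≫ g) → Mono g

/-- `I` is an injective envelope of `M`. -/
def IsInjEnvOf (M I : ModuleCat.{0} A) : Prop :=
  ∃ f : M ⟶ I, IsInjectiveEnvelopeHom A f

/-- `X ≅ Ω M`, the kernel of a projective cover of `M`. -/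
def IsSyzygyOf (M X : ModuleCat.{0} A) : Prop :=
  ∃ (P : ModuleCat.{0} A) (f : P ⟶ M), IsProjectiveCoverHom A f ∧ Nonempty (X ≅ kernel f)

/-- `X ≅ Σ M`, the cokernel of an injective envelope of `M`. -/
def IsCosyzygyOf (M X : ModuleCat.{0} A) : Prop :=
  ∃ (I : ModuleCat.{0} A) (f : M ⟶ I), IsInjectiveEnvelopeHom A f ∧ Nonempty (X ≅ cokernel f)

/-- `X ≅ Ω^n M`. -/
def IsNthSyzygy : ℕ → ModuleCat.{0} A → ModuleCat.{0} A → Prop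
  | 0, M, X => Nonempty (X ≅ M)
  | n + 1, M, X => ∃ Y, IsSyzygyOf A M Y ∧ IsNthSyzygy n Y X

/-- `X ≅ Σ^n M`. -/
def IsNthCosyzygy : ℕ → ModuleCat.{0} A → ModuleCat.{0} A → Prop
  | 0, M, X => Nonempty (X ≅ M)
  | n + 1, M, X => ∃ Y, IsCosyzygyOf A M Y ∧ IsNthCosyzygy n Y X

/-- `X` is a direct summand of `Y`. -/
def IsDirectSummandOf (X Y : ModuleCat.{0} A) : Prop :=
  ∃ (i : X ⟶ Y) (r : Y ⟶ X), i ≫ r = 𝟙 X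

/-- `X ∈ add W` : `X` is a direct summand of a finite direct sum of copies of `W`. -/
def InAdd (X W : ModuleCat.{0} A) : Prop :=
  ∃ n : ℕ, IsDirectSummandOf A X (ModuleCat.of A (Fin n → ↥W))

/-- The delooping level of `M` is at most `d` :
`Ω^d M ∈ add (A ⊕ Ω^{d+1} M')` for some finitely generated `M'`. -/
def DelLE (d : ℕ) (M : ModuleCat.{0} A) : Prop :=
  ∃ X, IsNthSyzygy A d M X ∧
    ∃ M' : ModuleCat.{0} A, Module.Finite A ↥M' ∧
      ∃ X', IsNthSyzygy A (d + 1) M' X' ∧ InAdd A X (ModuleCat.of A (A × ↥X'))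

/-- The delooping level `del M ∈ ℕ∞`. -/
def delLevel (M : ModuleCat.{0} A) : ℕ∞ :=
  sInf {d : ℕ∞ | ∃ n : ℕ, d = n ∧ DelLE A n M}

/-- The delooping level of the algebra: the supremum of `del S` over the simple modules. -/
def delAlg : ℕ∞ :=
  sSup {d : ℕ∞ | ∃ S : ModuleCat.{0} A, IsSimpleModule A ↥S ∧ delLevel A S = d}

/-- `Q` is a minimal injective cogenerator: the injective envelope of the direct sum of
a complete set of representatives of the simple modules. -/
def IsMinimalInjectiveCogenerator (Q : ModuleCat.{0} A) : Prop :=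
  ∃ (ι : Type) (_ : Fintype ι) (S : ι → ModuleCat.{0} A),
    (∀ i, IsSimpleModule A ↥(S i)) ∧
    (∀ T : ModuleCat.{0} A, IsSimpleModule A ↥T → ∃! i, Nonempty (↥T ≃ₗ[A] ↥(S i))) ∧
    IsInjEnvOf A (ModuleCat.of A (∀ i, ↥(S i))) Q

/-- The desuspending level of `M` is at most `d` :
`Σ^d M ∈ add (D(A) ⊕ Σ^{d+1} M')` for some finitely generated `M'`. -/
def DesLE (d : ℕ) (M : ModuleCat.{0} A) : Prop :=
  ∃ X, IsNthCosyzygy A d M X ∧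
    ∃ Q, IsMinimalInjectiveCogenerator A Q ∧
      ∃ M' : ModuleCat.{0} A, Module.Finite A ↥M' ∧
        ∃ X', IsNthCosyzygy A (d + 1) M' X' ∧ InAdd A X (ModuleCat.of A (↥Q × ↥X'))

/-- The desuspending level `des M ∈ ℕ∞`. -/
def desLevel (M : ModuleCat.{0} A) : ℕ∞ :=
  sInf {d : ℕ∞ | ∃ n : ℕ, d = n ∧ DesLE A n M}

/-- The desuspending level of the algebra. -/
def desAlg : ℕ∞ :=
  sSup {d : ℕ∞ | ∃ S : ModuleCat.{0} A, IsSimpleModule A ↥S ∧ desLevel A S = d}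

/-- The (small) finitistic projective dimension `fin-pro A`. -/
def finProDim : ℕ∞ :=
  sSup {d : ℕ∞ | ∃ M : ModuleCat.{0} A, Module.Finite A ↥M ∧ projDim A M = d ∧ d ≠ ⊤}

/-- The (small) finitistic injective dimension `fin-inj A`. -/
def finInjDim : ℕ∞ :=
  sSup {d : ℕ∞ | ∃ M : ModuleCat.{0} A, Module.Finite A ↥M ∧ injDim A M = d ∧ d ≠ ⊤}

/-- The big finitistic projective dimension `Fin-pro A`. -/
def bigFinProDim : ℕ∞ :=
  sSup {d : ℕ∞ | ∃ M : ModuleCat.{0} A, projDim A M = d ∧ d ≠ ⊤}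

/-- The big finitistic injective dimension `Fin-inj A`. -/
def bigFinInjDim : ℕ∞ :=
  sSup {d : ℕ∞ | ∃ M : ModuleCat.{0} A, injDim A M = d ∧ d ≠ ⊤}

/-- `M` is an indecomposable nonzero module. -/
def Indec (M : ModuleCat.{0} A) : Prop :=
  Nontrivial ↥M ∧ ∀ (N₁ N₂ : Submodule A ↥M), IsCompl N₁ N₂ → N₁ = ⊥ ∨ N₂ = ⊥

/-- `M` is serial (uniserial): its submodules form a chain. -/
def IsUniserial (M : ModuleCat.{0} A) : Prop :=
  ∀ N₁ N₂ : Submodule A ↥M, N₁ ≤ N₂ ∨ N₂ ≤ N₁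

/-- `A` is a Nakayama algebra: all finitely generated indecomposable modules are serial. -/
def IsNakayama : Prop :=
  ∀ M : ModuleCat.{0} A, Module.Finite A ↥M → Indec A M → IsUniserial A M

/-- `A` is connected: it is not a nontrivial product of algebras. -/
def IsConnectedAlgebra : Prop :=
  Nontrivial A ∧ ∀ e : A, IsIdempotentElem e → e ∈ Set.center A → e = 0 ∨ e = 1

/-- `A` is a cyclic Nakayama algebra: connected Nakayama with no simple projective module. -/
def IsCyclicNakayama : Prop :=
  IsNakayama A ∧ IsConnectedAlgebra A ∧
    ¬ ∃ S : ModuleCat.{0} A, IsSimpleModule A ↥S ∧ Projective S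

/-- `T ≅ top M` (and `top M` is simple): there is an essential epimorphism `M ⟶ T`. -/
def IsSimpleTopOf (M T : ModuleCat.{0} A) : Prop :=
  IsSimpleModule A ↥T ∧
    ∃ f : M ⟶ T, Epi f ∧ ∀ (N : ModuleCat.{0} A) (g : N ⟶ M), Epi (g ≫ f) → Epi g

/-- `S ≅ soc M` (and `soc M` is simple): there is an essential monomorphism `S ⟶ M`. -/
def IsSimpleSocOf (M S : ModuleCat.{0} A) : Prop :=
  IsSimpleModule A ↥S ∧
    ∃ f : S ⟶ M, Mono f ∧ ∀ (N : ModuleCat.{0} A) (g : M ⟶ N), Mono (f ≫ g) → Mono g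

/-- `0 ⟶ N ⟶ E ⟶ M ⟶ 0` is an almost split (Auslander-Reiten) sequence. -/
def IsAlmostSplitSeq {N E M : ModuleCat.{0} A} (f : N ⟶ E) (g : E ⟶ M) : Prop :=
  Mono f ∧ Epi g ∧ (∃ w : f ≫ g = 0, (ShortComplex.mk f g w).Exact) ∧
  (¬ ∃ s : M ⟶ E, s ≫ g = 𝟙 M) ∧ Indec A N ∧ Indec A M ∧
  ∀ (X : ModuleCat.{0} A) (h : X ⟶ M), (¬ ∃ s : M ⟶ X, s ≫ h = 𝟙 M) → ∃ h' : X ⟶ E, h' ≫ g = h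

/-- `N ≅ τ M`, the Auslander-Reiten translate of `M` : there is an almost split sequence
`0 ⟶ N ⟶ E ⟶ M ⟶ 0`. -/
def IsTauOf (N M : ModuleCat.{0} A) : Prop :=
  ∃ (E : ModuleCat.{0} A) (f : N ⟶ E) (g : E ⟶ M), IsAlmostSplitSeq A f g

/-- `U ≅ ψ S = τ⁻ top (I S)`. -/
def IsPsiOf (S U : ModuleCat.{0} A) : Prop :=
  ∃ I, IsInjEnvOf A S I ∧ ∃ T, IsSimpleTopOf A I T ∧ IsTauOf A T U

/-- `T ≅ γ S = τ soc (P S)`. -/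
def IsGammaOf (S T : ModuleCat.{0} A) : Prop :=
  ∃ P, IsProjCoverOf A S P ∧ ∃ U, IsSimpleSocOf A P U ∧ IsTauOf A T U

/-- `T ≅ φ S = top (I S)`. -/
def IsPhiOf (S T : ModuleCat.{0} A) : Prop :=
  ∃ I, IsInjEnvOf A S I ∧ IsSimpleTopOf A I T

/-- There is a `ψ`-path `(S_1, …, S_m)` of cardinality `m` ending in `S`. -/
def PsiPathTo (m : ℕ) (S : ModuleCat.{0} A) : Prop :=
  1 ≤ m ∧ ∃ c : ℕ → ModuleCat.{0} A,
    (∀ i < m, IsSimpleModule A ↥(c i)) ∧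
    (∀ i, i + 1 < m → IsPsiOf A (c i) (c (i + 1))) ∧
    Nonempty (c (m - 1) ≅ S)

/-- `a(S)`: the supremum of the cardinalities of `ψ`-paths ending in `S`. -/
def aVal (S : ModuleCat.{0} A) : ℕ∞ :=
  sSup {d : ℕ∞ | ∃ m : ℕ, d = m ∧ PsiPathTo A m S}

/-- `a(A)`: the maximum of `a(S)` over the simple modules which are not `ψ`-cyclic. -/
def aAlg : ℕ∞ :=
  sSup {d : ℕ∞ | ∃ S : ModuleCat.{0} A, IsSimpleModule A ↥S ∧ aVal A S ≠ ⊤ ∧ aVal A S = d}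

/-- `S` is a composition factor of `M`: a simple subquotient of `M`. -/
def IsCompFactorOf (S M : ModuleCat.{0} A) : Prop :=
  IsSimpleModule A ↥S ∧ ∃ N' N : Submodule A ↥M, N' ≤ N ∧
    Nonempty ((↥N ⧸ N'.comap N.subtype) ≃ₗ[A] ↥S)

/-- `e(S) = min {pd S, pd (I S)} = x`. -/
def ERelVal (S : ModuleCat.{0} A) (x : ℕ∞) : Prop :=
  ∃ I, IsInjEnvOf A S I ∧ x = min (projDim A S) (projDim A I)

/-- `e*(S) = min {id S, id (P S)} = x`. -/
def EStarVal (S : ModuleCat.{0} A) (x : ℕ∞) : Prop :=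
  ∃ P, IsProjCoverOf A S P ∧ x = min (injDim A S) (injDim A P)

/-- `T = h(S) = top (Ω^{e(S)} N S)`, the homological permutation. -/
def HRel (S T : ModuleCat.{0} A) : Prop :=
  IsSimpleModule A ↥S ∧ IsSimpleModule A ↥T ∧
  ∃ z : ℕ, ERelVal A S z ∧
    ∃ N, ((Odd z ∧ N = S) ∨ (Even z ∧ IsInjEnvOf A S N)) ∧
      ∃ X, IsNthSyzygy A z N X ∧ IsSimpleTopOf A X T

/-- `S = h*(T) = soc (Σ^{e*(T)} N* T)`, the inverse homological permutation. -/
def HStarRel (T S : ModuleCat.{0} A) : Prop :=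
  IsSimpleModule A ↥T ∧ IsSimpleModule A ↥S ∧
  ∃ z : ℕ, EStarVal A T z ∧
    ∃ N, ((Odd z ∧ N = T) ∨ (Even z ∧ IsProjCoverOf A T N)) ∧
      ∃ X, IsNthCosyzygy A z N X ∧ IsSimpleSocOf A X S

/-- The `t`-fold relational iterate of a relation on modules (up to isomorphism). -/
def IterRel (r : ModuleCat.{0} A → ModuleCat.{0} A → Prop) :
    ℕ → ModuleCat.{0} A → ModuleCat.{0} A → Prop
  | 0, X, Y => Nonempty (X ≅ Y)
  | n + 1, X, Y => ∃ Z, r X Z ∧ IterRel r n Z Y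

end ArtinAlg

/-!
The six invariants are shown to satisfy
`fin-inj A ≤ del A ≤ d ≤ fin-pro A ≤ des A ≤ d' ≤ fin-inj A`, of which the last three inequalities
are dual to the first three.

If `id M = n` is positive and finite, then `Extⁿ(S, M) ≠ 0` for some simple `S`. When `del S < n`,
dimension shifting along the syzygies of `S` embeds this group in a power of `Extⁿ⁺¹(M', M)` for
some `M'`, which vanishes; hence `fin-inj A ≤ del A`. An embedding `S ↪ M` gives `del S ≤ pd M` by
the horseshoe lemma: if `pd M = m`, the syzygy `Ω^m S` is a direct summand of
`Ω^(m+1) (M / S) ⊕ P` with `P` projective. With `M = S` or `M = IS` this gives `del A ≤ d`.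

The inequality `d ≤ fin-pro A` is the one special to Nakayama algebras: `IS` has finite projective
dimension whenever `S` does not. For a simple module `S`, let `ψ S` be the simple module `T` for
which the top of `IS` is the socle of a uniserial module of length two with top `T`. Every simple
`T` with `pd T = ∞` is `ψ S` for some simple `S` with `pd S = ∞` and `pd IS < ∞`. As `ψ` is a
partial function and there are finitely many simple modules, `ψ` permutes those of infinite
projective dimension, so that every one of them arises as such an `S`.
-/

namespace ArtinAlg

section ExtVanishing

open Abelian ZeroObject

universe w v u

variable {C : Type u} [Category.{v} C] [Abelian C] [HasExt.{w} C]

/-- The objects `X` with `Ext^n(X, Y) = 0`, as an `ObjectProperty` so that its closure under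
extensions and direct summands can be recorded by instances. -/
def extVanishingLeft (Y : C) (n : ℕ) : ObjectProperty C := fun X => Subsingleton (Ext X Y n)

/-- The objects `Y` with `Ext^n(X, Y) = 0`, as an `ObjectProperty` so that its closure under
extensions and direct summands can be recorded by instances. -/
def extVanishingRight (X : C) (n : ℕ) : ObjectProperty C := fun Y => Subsingleton (Ext X Y n)

instance (Y : C) (n : ℕ) : (extVanishingLeft Y n).ContainsZero where
  exists_zero := by
    have h : HasProjectiveDimensionLT (0 : C) 0 := inferInstance
    exact ⟨0, isZero_zero C, h.subsingleton _ _ n n.zero_le Y⟩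

instance (X : C) (n : ℕ) : (extVanishingRight X n).ContainsZero where
  exists_zero := by
    have h : HasInjectiveDimensionLT (0 : C) 0 := inferInstance
    exact ⟨0, isZero_zero C, h.subsingleton _ _ n n.zero_le X⟩

instance (Y : C) (n : ℕ) : (extVanishingLeft Y n).IsStableUnderRetracts where
  of_retract {X X'} r (h : Subsingleton (Ext X' Y n)) := by
    refine subsingleton_of_forall_eq 0 fun x => ?_
    rw [← Ext.mk₀_id_comp x, ← r.retract, ← Ext.mk₀_comp_mk₀_assoc,
      Subsingleton.elim ((Ext.mk₀ r.r).comp x (zero_add n)) 0, Ext.comp_zero]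

instance (X : C) (n : ℕ) : (extVanishingRight X n).IsStableUnderRetracts where
  of_retract {Y Y'} r (h : Subsingleton (Ext X Y' n)) := by
    refine subsingleton_of_forall_eq 0 fun x => ?_
    rw [← Ext.comp_mk₀_id x, ← r.retract, ← Ext.mk₀_comp_mk₀,
      ← Ext.comp_assoc _ _ _ (add_zero n) (add_zero 0) (by omega),
      Subsingleton.elim (x.comp (Ext.mk₀ r.i) (add_zero n)) 0, Ext.zero_comp]

instance (Y : C) (n : ℕ) : (extVanishingLeft Y n).IsClosedUnderExtensions where
  prop_X₂_of_shortExact {S} hS (h₁ : Subsingleton (Ext S.X₁ Y n))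
      (h₃ : Subsingleton (Ext S.X₃ Y n)) := by
    refine subsingleton_of_forall_eq 0 fun x => ?_
    obtain ⟨x₃, rfl⟩ := Ext.contravariant_sequence_exact₂ hS _ x (Subsingleton.elim _ _)
    rw [Subsingleton.elim x₃ 0, Ext.comp_zero]

instance (X : C) (n : ℕ) : (extVanishingRight X n).IsClosedUnderExtensions where
  prop_X₂_of_shortExact {S} hS (h₁ : Subsingleton (Ext X S.X₁ n))
      (h₃ : Subsingleton (Ext X S.X₃ n)) := by
    refine subsingleton_of_forall_eq 0 fun x => ?_
    obtain ⟨x₁, rfl⟩ := Ext.covariant_sequence_exact₂ _ hS x (Subsingleton.elim _ _)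
    rw [Subsingleton.elim x₁ 0, Ext.zero_comp]

variable {S : ShortComplex C}

theorem subsingleton_ext_succ_iff_of_projective (hS : S.ShortExact) [Projective S.X₂]
    (Y : C) (n : ℕ) :
    Subsingleton (Ext S.X₁ Y (n + 1)) ↔ Subsingleton (Ext S.X₃ Y (n + 2)) := by
  have hn : 1 + (n + 1) = n + 2 := by omega
  constructor <;> intro h <;> refine subsingleton_of_forall_eq 0 fun x => ?_
  · obtain ⟨x₁, rfl⟩ :=
      Ext.contravariant_sequence_exact₃ hS _ x (Ext.eq_zero_of_projective _) hn
    rw [Subsingleton.elim x₁ 0, Ext.comp_zero]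
  · obtain ⟨x₂, rfl⟩ := Ext.contravariant_sequence_exact₁ hS _ x hn (Subsingleton.elim _ _)
    rw [Ext.eq_zero_of_projective x₂, Ext.comp_zero]

theorem subsingleton_ext_succ_iff_of_injective (hS : S.ShortExact) [Injective S.X₂]
    (X : C) (n : ℕ) :
    Subsingleton (Ext X S.X₃ (n + 1)) ↔ Subsingleton (Ext X S.X₁ (n + 2)) := by
  constructor <;> intro h <;> refine subsingleton_of_forall_eq 0 fun x => ?_
  · obtain ⟨x₃, rfl⟩ := Ext.covariant_sequence_exact₁ _ hS x (Ext.eq_zero_of_injective _) rfl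
    rw [Subsingleton.elim x₃ 0, Ext.zero_comp]
  · obtain ⟨x₂, rfl⟩ := Ext.covariant_sequence_exact₃ _ hS x rfl (Subsingleton.elim _ _)
    rw [Ext.eq_zero_of_injective x₂, Ext.zero_comp]

theorem exists_f_comp_eq_of_ext_one (hS : S.ShortExact) {Y : C} [Subsingleton (Ext S.X₃ Y 1)]
    (g : S.X₁ ⟶ Y) : ∃ g' : S.X₂ ⟶ Y, S.f ≫ g' = g := by
  obtain ⟨x, hx⟩ :=
    Ext.contravariant_sequence_exact₁ hS Y (Ext.mk₀ g) (add_zero 1) (Subsingleton.elim _ _)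
  obtain ⟨g', rfl⟩ := (Ext.mk₀_bijective _ _).2 x
  exact ⟨g', (Ext.mk₀_bijective _ _).1 ((Ext.mk₀_comp_mk₀ _ _).symm.trans hx)⟩

theorem exists_comp_g_eq_of_ext_one (hS : S.ShortExact) {X : C} [Subsingleton (Ext X S.X₁ 1)]
    (g : X ⟶ S.X₃) : ∃ g' : X ⟶ S.X₂, g' ≫ S.g = g := by
  obtain ⟨x, hx⟩ :=
    Ext.covariant_sequence_exact₃ X hS (Ext.mk₀ g) (zero_add 1) (Subsingleton.elim _ _)
  obtain ⟨g', rfl⟩ := (Ext.mk₀_bijective _ _).2 x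
  exact ⟨g', (Ext.mk₀_bijective _ _).1 ((Ext.mk₀_comp_mk₀ _ _).symm.trans hx)⟩

end ExtVanishing

section ModuleCategory

variable {A : Type} [Ring A]

theorem shortExact_of_exact {X Y Z : Type} [AddCommGroup X] [AddCommGroup Y] [AddCommGroup Z]
    [Module A X] [Module A Y] [Module A Z] {i : X →ₗ[A] Y} {p : Y →ₗ[A] Z}
    (hi : Function.Injective i) (hp : Function.Surjective p) (h : Function.Exact i p) :
    (ModuleCat.shortComplexOfCompEqZero i p h.linearMap_comp_eq_zero).ShortExact :=
  ModuleCat.shortComplex_shortExact _ h hi hp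

theorem shortExact_subtype_mkQ {M : Type} [AddCommGroup M] [Module A M] (N : Submodule A M) :
    (ModuleCat.shortComplexOfCompEqZero N.subtype N.mkQ
      (LinearMap.exact_subtype_mkQ N).linearMap_comp_eq_zero).ShortExact :=
  shortExact_of_exact N.injective_subtype N.mkQ_surjective (LinearMap.exact_subtype_mkQ N)

theorem shortExact_kernel {M N : ModuleCat.{0} A} (f : M ⟶ N) [Epi f] :
    (ShortComplex.mk _ _ (kernel.condition f)).ShortExact :=
  { exact := ShortComplex.exact_kernel f }

theorem shortExact_cokernel {M N : ModuleCat.{0} A} (f : M ⟶ N) [Mono f] :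
    (ShortComplex.mk _ _ (cokernel.condition f)).ShortExact :=
  { exact := ShortComplex.exact_cokernel f }

theorem projective_of (P : Type) [AddCommGroup P] [Module A P] [Module.Projective A P] :
    Projective (ModuleCat.of A P) :=
  (IsProjective.iff_projective P).mp inferInstance

theorem prop_of_isFiniteLength (P : ObjectProperty (ModuleCat.{0} A)) [P.ContainsZero]
    [P.IsClosedUnderIsomorphisms] [P.IsClosedUnderExtensions]
    (hP : ∀ S : ModuleCat.{0} A, IsSimpleModule A S → P S)
    {X : Type} [AddCommGroup X] [Module A X] (hX : IsFiniteLength A X) :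
    P (ModuleCat.of A X) := by
  induction hX with
  | of_subsingleton => exact P.prop_of_isZero (ModuleCat.isZero_of_subsingleton _)
  | @of_simple_quotient M _ _ N hN _ ih =>
    exact P.prop_X₂_of_shortExact (shortExact_subtype_mkQ N) ih (hP (ModuleCat.of A (M ⧸ N)) hN)

theorem prop_pi_fin (P : ObjectProperty (ModuleCat.{0} A)) [P.ContainsZero]
    [P.IsClosedUnderIsomorphisms] [P.IsClosedUnderExtensions] {W : ModuleCat.{0} A} (hW : P W)
    (n : ℕ) : P (ModuleCat.of A (Fin n → W)) := by
  induction n with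
  | zero => exact P.prop_of_isZero (ModuleCat.isZero_of_subsingleton _)
  | succ n ih =>
    exact P.prop_of_iso (ModuleCat.biprodIsoProd W _ ≪≫
      (Fin.consLinearEquiv A fun _ : Fin (n + 1) => W).toModuleIso) (P.prop_biprod hW ih)

theorem prop_of_inAdd_prod (P : ObjectProperty (ModuleCat.{0} A)) [P.ContainsZero]
    [P.IsStableUnderRetracts] [P.IsClosedUnderExtensions] {X B Y : ModuleCat.{0} A}
    (hX : InAdd A X (ModuleCat.of A (B × Y))) (hB : P B) (hY : P Y) : P X := by
  obtain ⟨n, i, r, hir⟩ := hX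
  have hBY : P (ModuleCat.of A (B × Y)) :=
    P.prop_of_iso (ModuleCat.biprodIsoProd B Y) (P.prop_biprod hB hY)
  exact P.prop_of_retract ⟨i, r, hir⟩ (prop_pi_fin P hBY n)

theorem isFiniteLength_of_finite [IsArtinianRing A] (X : Type) [AddCommGroup X] [Module A X]
    [Module.Finite A X] : IsFiniteLength A X :=
  isFiniteLength_iff_isNoetherian_isArtinian.mpr ⟨inferInstance, inferInstance⟩

end ModuleCategory

section Dimension

open Abelian

variable {A : Type} [Ring A]

theorem projDimLE_iff (n : ℕ) (M : ModuleCat.{0} A) :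
    ProjDimLE A n M ↔ HasProjectiveDimensionLT M (n + 1) := by
  constructor
  · intro h
    induction h with
    | zero M _ => infer_instance
    | succ n M P f hP hf _ ih =>
      exact (shortExact_kernel f).hasProjectiveDimensionLT_X₃ (n + 1) ih inferInstance
  · induction n generalizing M with
    | zero => exact fun h => .zero M (projective_iff_hasProjectiveDimensionLT_one.mpr h)
    | succ n ih =>
      intro h
      obtain ⟨p⟩ := EnoughProjectives.presentation M
      have := p.epi
      have := p.projective
      exact .succ n M p.p p.f p.projective p.epi <| ih _ <|
        (shortExact_kernel p.f).hasProjectiveDimensionLT_X₁ (n + 1) inferInstance h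

theorem injDimLE_iff (n : ℕ) (M : ModuleCat.{0} A) :
    InjDimLE A n M ↔ HasInjectiveDimensionLT M (n + 1) := by
  constructor
  · intro h
    induction h with
    | zero M _ => infer_instance
    | succ n M I f hI hf _ ih =>
      exact (shortExact_cokernel f).hasInjectiveDimensionLT_X₁ (n + 1) ih inferInstance
  · induction n generalizing M with
    | zero => exact fun h => .zero M (injective_iff_hasInjectiveDimensionLT_one.mpr h)
    | succ n ih =>
      intro h
      obtain ⟨p⟩ := EnoughInjectives.presentation M
      have := p.mono
      have := p.injective
      exact .succ n M p.J p.f p.injective p.mono <| ih _ <|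
        (shortExact_cokernel p.f).hasInjectiveDimensionLT_X₃ (n + 1) inferInstance h

theorem sInf_natCast_le_iff {p : ℕ → Prop} (hp : ∀ m n, m ≤ n → p m → p n) (n : ℕ) :
    sInf {d : ℕ∞ | ∃ n : ℕ, d = n ∧ p n} ≤ n ↔ p n := by
  refine ⟨fun h => ?_, fun h => sInf_le ⟨n, rfl, h⟩⟩
  have hne : {d : ℕ∞ | ∃ n : ℕ, d = n ∧ p n}.Nonempty := by
    by_contra! hempty
    simp [hempty] at h
  obtain ⟨m, hm, hpm⟩ := csInf_mem hne
  rw [hm] at h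
  exact hp m n (by exact_mod_cast h) hpm

theorem projDim_le_iff (n : ℕ) (M : ModuleCat.{0} A) :
    projDim A M ≤ n ↔ HasProjectiveDimensionLT M (n + 1) := by
  rw [← projDimLE_iff]
  refine sInf_natCast_le_iff (fun m n hmn h => ?_) n
  rw [projDimLE_iff] at h ⊢
  exact hasProjectiveDimensionLT_of_ge M (m + 1) _ (by omega)

theorem injDim_le_iff (n : ℕ) (M : ModuleCat.{0} A) :
    injDim A M ≤ n ↔ HasInjectiveDimensionLT M (n + 1) := by
  rw [← injDimLE_iff]
  refine sInf_natCast_le_iff (fun m n hmn h => ?_) n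
  rw [injDimLE_iff] at h ⊢
  exact hasInjectiveDimensionLT_of_ge M (m + 1) _ (by omega)

variable (A) in
/-- `M` has finite projective dimension; the form of `projDim A M ≠ ⊤` that applies to unbundled
modules. -/
def HasFiniteProjDim (M : Type) [AddCommGroup M] [Module A M] : Prop :=
  ∃ n, HasProjectiveDimensionLT (ModuleCat.of A M) n

variable (A) in
/-- `M` has finite injective dimension; the form of `injDim A M ≠ ⊤` that applies to unbundled
modules. -/
def HasFiniteInjDim (M : Type) [AddCommGroup M] [Module A M] : Prop :=
  ∃ n, HasInjectiveDimensionLT (ModuleCat.of A M) n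

theorem projDim_ne_top_iff (M : ModuleCat.{0} A) : projDim A M ≠ ⊤ ↔ HasFiniteProjDim A M := by
  constructor
  · intro h
    obtain ⟨n, hn⟩ := ENat.ne_top_iff_exists.mp h
    exact ⟨n + 1, (projDim_le_iff n M).mp hn.ge⟩
  · rintro ⟨n, hn⟩
    have hle := (projDim_le_iff n M).mpr (hasProjectiveDimensionLT_of_ge M n _ (by omega))
    exact ne_top_of_le_ne_top (ENat.natCast_ne_top n) hle

theorem injDim_ne_top_iff (M : ModuleCat.{0} A) : injDim A M ≠ ⊤ ↔ HasFiniteInjDim A M := by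
  constructor
  · intro h
    obtain ⟨n, hn⟩ := ENat.ne_top_iff_exists.mp h
    exact ⟨n + 1, (injDim_le_iff n M).mp hn.ge⟩
  · rintro ⟨n, hn⟩
    have hle := (injDim_le_iff n M).mpr (hasInjectiveDimensionLT_of_ge M n _ (by omega))
    exact ne_top_of_le_ne_top (ENat.natCast_ne_top n) hle

theorem subsingleton_ext_syzygy_iff {k : ℕ} {M X : ModuleCat.{0} A} (h : IsNthSyzygy A k M X)
    (Y : ModuleCat.{0} A) (j : ℕ) :
    Subsingleton (Ext X Y (j + 1)) ↔ Subsingleton (Ext M Y (j + k + 1)) := by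
  induction k generalizing M with
  | zero => exact (extVanishingLeft Y (j + 1)).prop_iff_of_iso h.some
  | succ k ih =>
    obtain ⟨Z, ⟨P, f, ⟨hP, hf, -⟩, ⟨e⟩⟩, hZ⟩ := h
    rw [ih hZ]
    exact ((extVanishingLeft Y (j + k + 1)).prop_iff_of_iso e).trans
      (subsingleton_ext_succ_iff_of_projective (shortExact_kernel f) Y (j + k))

theorem subsingleton_ext_cosyzygy_iff {k : ℕ} {M X : ModuleCat.{0} A}
    (h : IsNthCosyzygy A k M X) (Y : ModuleCat.{0} A) (j : ℕ) :
    Subsingleton (Ext Y X (j + 1)) ↔ Subsingleton (Ext Y M (j + k + 1)) := by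
  induction k generalizing M with
  | zero => exact (extVanishingRight Y (j + 1)).prop_iff_of_iso h.some
  | succ k ih =>
    obtain ⟨Z, ⟨I, f, ⟨hI, hf, -⟩, ⟨e⟩⟩, hZ⟩ := h
    rw [ih hZ]
    exact ((extVanishingRight Y (j + k + 1)).prop_iff_of_iso e).trans
      (subsingleton_ext_succ_iff_of_injective (shortExact_cokernel f) Y (j + k))

end Dimension

section FinitisticLeLevel

open Abelian

variable {A : Type} [Ring A]

theorem injective_of_ext_one_finite (M : ModuleCat.{0} A)
    (h : ∀ X : ModuleCat.{0} A, Module.Finite A X → Subsingleton (Ext X M 1)) :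
    Injective M := by
  have hBaer : Module.Baer A M := by
    intro I g
    have := h (ModuleCat.of A (A ⧸ I)) inferInstance
    obtain ⟨g', hg'⟩ := exists_f_comp_eq_of_ext_one
      (S := ModuleCat.shortComplexOfCompEqZero I.subtype I.mkQ _) (Y := M)
      (shortExact_subtype_mkQ I) (ModuleCat.ofHom g)
    exact ⟨g'.hom, fun x hx => congrArg (fun t => t.hom ⟨x, hx⟩) hg'⟩
  exact (Module.injective_iff_injective_object A M).mp hBaer.injective

theorem hasInjectiveDimensionLT_of_ext_finite (n : ℕ) (M : ModuleCat.{0} A)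
    (h : ∀ X : ModuleCat.{0} A, Module.Finite A X → Subsingleton (Ext X M (n + 1))) :
    HasInjectiveDimensionLT M (n + 1) := by
  induction n generalizing M with
  | zero => exact injective_iff_hasInjectiveDimensionLT_one.mp (injective_of_ext_one_finite M h)
  | succ n ih =>
    obtain ⟨p⟩ := EnoughInjectives.presentation M
    have := p.mono
    have := p.injective
    have hs := shortExact_cokernel p.f
    exact hs.hasInjectiveDimensionLT_X₁ (n + 1)
      (ih _ fun X hX => (subsingleton_ext_succ_iff_of_injective hs X n).mpr (h X hX))
      inferInstance

theorem hasProjectiveDimensionLT_of_ext_finite [IsNoetherianRing A] (n : ℕ)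
    (M : ModuleCat.{0} A) [Module.Finite A M]
    (h : ∀ X : ModuleCat.{0} A, Module.Finite A X → Subsingleton (Ext M X (n + 1))) :
    HasProjectiveDimensionLT M (n + 1) := by
  induction n generalizing M with
  | zero =>
    obtain ⟨k, f, hf⟩ := Module.Finite.exists_fin' A M
    have := h (ModuleCat.of A (LinearMap.ker f)) inferInstance
    obtain ⟨s, hs⟩ := exists_comp_g_eq_of_ext_one (S := f.shortComplexKer) (X := M)
      (LinearMap.shortExact_shortComplexKer hf) (𝟙 M)
    have := projective_of (A := A) (Fin k → A)
    exact projective_iff_hasProjectiveDimensionLT_one.mp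
      (Retract.projective (Y := ModuleCat.of A (Fin k → A)) ⟨s, ModuleCat.ofHom f, hs⟩)
  | succ n ih =>
    obtain ⟨k, f, hf⟩ := Module.Finite.exists_fin' A M
    have hs := LinearMap.shortExact_shortComplexKer hf
    have hP : Projective f.shortComplexKer.X₂ := projective_of (A := A) (Fin k → A)
    have : Module.Finite A f.shortComplexKer.X₁ :=
      inferInstanceAs (Module.Finite A (LinearMap.ker f))
    exact (hs.hasProjectiveDimensionLT_X₃_iff n hP).mpr <| ih _ fun X hX =>
      (subsingleton_ext_succ_iff_of_projective hs X n).mpr (h X hX)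

theorem exists_simple_not_subsingleton_ext_of_injDim_eq [IsArtinianRing A] {n : ℕ}
    {M : ModuleCat.{0} A} (hM : injDim A M = (n + 1 : ℕ)) :
    ∃ S : ModuleCat.{0} A, IsSimpleModule A S ∧ ¬ Subsingleton (Ext S M (n + 1)) := by
  by_contra! h
  have hlt := hasInjectiveDimensionLT_of_ext_finite n M fun X _ =>
    prop_of_isFiniteLength (extVanishingLeft M (n + 1)) h (isFiniteLength_of_finite X)
  have hle := (injDim_le_iff n M).mpr hlt
  rw [hM, Nat.cast_le] at hle
  omega

theorem exists_simple_not_subsingleton_ext_of_projDim_eq [IsArtinianRing A] {n : ℕ}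
    {M : ModuleCat.{0} A} [Module.Finite A M] (hM : projDim A M = (n + 1 : ℕ)) :
    ∃ S : ModuleCat.{0} A, IsSimpleModule A S ∧ ¬ Subsingleton (Ext M S (n + 1)) := by
  by_contra! h
  have hlt := hasProjectiveDimensionLT_of_ext_finite n M fun X _ =>
    prop_of_isFiniteLength (extVanishingRight M (n + 1)) h (isFiniteLength_of_finite X)
  have hle := (projDim_le_iff n M).mpr hlt
  rw [hM, Nat.cast_le] at hle
  omega

theorem subsingleton_ext_of_delLE {m n : ℕ} {S M : ModuleCat.{0} A} (hS : DelLE A m S)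
    (hM : HasInjectiveDimensionLT M (n + 2)) (hmn : m ≤ n) : Subsingleton (Ext S M (n + 1)) := by
  obtain ⟨X, hX, M', -, X', hX', hadd⟩ := hS
  obtain ⟨j, rfl⟩ := Nat.exists_eq_add_of_le' hmn
  rw [← subsingleton_ext_syzygy_iff hX]
  have := projective_of (A := A) A
  exact prop_of_inAdd_prod (extVanishingLeft M (j + 1)) (B := ModuleCat.of A A) hadd
    (Ext.subsingleton_of_projective _ _ _)
    ((subsingleton_ext_syzygy_iff hX' M j).mpr (hM.subsingleton _ _ _ (by omega) _))

theorem subsingleton_ext_of_desLE {m n : ℕ} {S M : ModuleCat.{0} A} (hS : DesLE A m S)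
    (hM : HasProjectiveDimensionLT M (n + 2)) (hmn : m ≤ n) :
    Subsingleton (Ext M S (n + 1)) := by
  obtain ⟨X, hX, Q, ⟨_, _, _, _, _, _, hQ, -⟩, M', -, X', hX', hadd⟩ := hS
  obtain ⟨j, rfl⟩ := Nat.exists_eq_add_of_le' hmn
  rw [← subsingleton_ext_cosyzygy_iff hX]
  exact prop_of_inAdd_prod (extVanishingRight M (j + 1)) hadd
    (Ext.subsingleton_of_injective _ _ _)
    ((subsingleton_ext_cosyzygy_iff hX' M j).mpr (hM.subsingleton _ _ _ (by omega) _))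

theorem finInjDim_le_delAlg [IsArtinianRing A] : finInjDim A ≤ delAlg A := by
  refine sSup_le ?_
  rintro _ ⟨M, -, rfl, hfin⟩
  obtain ⟨n | n, hn⟩ := ENat.ne_top_iff_exists.mp hfin
  · simp [← hn]
  obtain ⟨S, hS, hext⟩ := exists_simple_not_subsingleton_ext_of_injDim_eq hn.symm
  refine le_sSup_of_le ⟨S, hS, rfl⟩ (le_sInf ?_)
  rintro _ ⟨m, rfl, hm⟩
  by_contra! hlt
  rw [← hn, Nat.cast_lt] at hlt
  exact hext (subsingleton_ext_of_delLE hm ((injDim_le_iff (n + 1) M).mp hn.ge) (by omega))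

theorem finProDim_le_desAlg [IsArtinianRing A] : finProDim A ≤ desAlg A := by
  refine sSup_le ?_
  rintro _ ⟨M, hM, rfl, hfin⟩
  obtain ⟨n | n, hn⟩ := ENat.ne_top_iff_exists.mp hfin
  · simp [← hn]
  obtain ⟨S, hS, hext⟩ := exists_simple_not_subsingleton_ext_of_projDim_eq hn.symm
  refine le_sSup_of_le ⟨S, hS, rfl⟩ (le_sInf ?_)
  rintro _ ⟨m, rfl, hm⟩
  by_contra! hlt
  rw [← hn, Nat.cast_lt] at hlt
  exact hext (subsingleton_ext_of_desLE hm ((projDim_le_iff (n + 1) M).mp hn.ge) (by omega))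

end FinitisticLeLevel

section EssentialExtensions

variable {A I : Type*} [Ring A] [AddCommGroup I] [Module A I]

/-- `E` is an essential extension of `M`, both being submodules of a fixed module. -/
def IsEssentialExtension (M E : Submodule A I) : Prop :=
  M ≤ E ∧ ∀ X ≤ E, Disjoint X M → X = ⊥

theorem exists_maximal_isEssentialExtension (M : Submodule A I) :
    ∃ E, Maximal (IsEssentialExtension M) E := by
  obtain ⟨E, -, hE⟩ := zorn_le_nonempty₀ {E | IsEssentialExtension M E}
    (fun c hc hchain E₀ hE₀ => by
      refine ⟨sSup c, ⟨(hc hE₀).1.trans (le_sSup hE₀), fun X hX hXM => ?_⟩, fun _ => le_sSup⟩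
      rw [← inf_eq_left.mpr hX, hchain.directedOn.inf_sSup_eq]
      exact iSup₂_eq_bot.mpr fun E hE => (hc hE).2 _ inf_le_right (hXM.mono_left inf_le_left))
    M ⟨le_rfl, fun X hX h => h.eq_bot_of_le hX⟩
  exact ⟨E, hE⟩

theorem exists_maximal_disjoint (E : Submodule A I) : ∃ C, Maximal (Disjoint E) C := by
  obtain ⟨C, -, hC⟩ := zorn_le_nonempty₀ {C | Disjoint E C}
    (fun c hc hchain _ _ => ⟨sSup c,
      hchain.directedOn.disjoint_sSup_right.mpr fun _ h => hc h, fun _ => le_sSup⟩)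
    ⊥ disjoint_bot_right
  exact ⟨C, hC⟩

theorem IsEssentialExtension.le_of_isSemisimpleModule {M E N : Submodule A I}
    (h : IsEssentialExtension M E) (hN : N ≤ E) [IsSemisimpleModule A N] : N ≤ M := by
  obtain ⟨X, hX⟩ := exists_isCompl (M.comap N.subtype)
  have hXM : Disjoint (X.map N.subtype) M := by
    refine Submodule.disjoint_def.mpr ?_
    rintro _ ⟨x, hx, rfl⟩ hxM
    exact congrArg Subtype.val (Submodule.disjoint_def.mp hX.disjoint x hxM hx)
  have hmap : X.map N.subtype = ⊥ := h.2 _ ((Submodule.map_subtype_le N X).trans hN) hXM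
  have hX0 : X = ⊥ := Submodule.map_injective_of_injective N.injective_subtype
    (hmap.trans (Submodule.map_bot _).symm)
  exact Submodule.comap_subtype_eq_top.mp (eq_top_of_isCompl_bot (hX0 ▸ hX))

theorem isSemisimpleModule_of_jacobson_smul_eq_bot [IsArtinianRing A] {N : Submodule A I}
    (hN : Ring.jacobson A • N = ⊥) : IsSemisimpleModule A N := by
  have h : Module.IsTorsionBySet A N (Ring.jacobson A : Ideal A) := fun x a => Subtype.ext <|
    (Submodule.mem_bot A).mp (hN.le (Submodule.smul_mem_smul a.2 x.2))
  let _ := h.module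
  exact (h.semilinearMap.isSemisimpleModule_iff_of_bijective Function.bijective_id).2 inferInstance

theorem IsEssentialExtension.mem_of_jacobson_smul_eq_zero [IsArtinianRing A]
    {M E : Submodule A I} (h : IsEssentialExtension M E) {x : I} (hx : x ∈ E)
    (hJ : ∀ a ∈ Ring.jacobson A, a • x = 0) : x ∈ M := by
  have hspan : Ring.jacobson A • Submodule.span A {x} = ⊥ := by
    refine le_bot_iff.mp (Submodule.smul_le.mpr fun a ha y hy => ?_)
    obtain ⟨b, rfl⟩ := Submodule.mem_span_singleton.mp hy
    rw [smul_smul]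
    exact hJ _ (Ideal.mul_mem_right _ _ ha)
  have := isSemisimpleModule_of_jacobson_smul_eq_bot hspan
  exact h.le_of_isSemisimpleModule ((Submodule.span_singleton_le_iff_mem x E).mpr hx)
    (Submodule.mem_span_singleton_self x)

-- Sending `x` to multiplication by `x` on `J` maps `X` to `Hom R J Y`, with kernel inside `M`.
theorem isNoetherian_of_ideal_smul_le {R : Type*} [CommRing R] [Algebra R A] [Module R I]
    [IsScalarTower R A I] {J : Ideal A} [Module.Finite R J] {X Y M : Submodule A I}
    [IsNoetherian R Y] [IsNoetherian R M] (hXY : J • X ≤ Y)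
    (hXM : ∀ x ∈ X, (∀ a ∈ J, a • x = 0) → x ∈ M) : IsNoetherian R X := by
  let Φ : X →ₗ[R] J →ₗ[R] Y := LinearMap.mk₂ R
    (fun x a => ⟨(a : A) • (x : I), hXY (Submodule.smul_mem_smul a.2 x.2)⟩)
    (fun _ _ _ => Subtype.ext (smul_add _ _ _)) (fun _ _ _ => Subtype.ext (smul_comm _ _ _))
    (fun _ _ _ => Subtype.ext (add_smul _ _ _)) (fun _ _ _ => Subtype.ext (smul_assoc _ _ _))
  have hker (x : X) (hx : x ∈ Φ.ker) : (x : I) ∈ M :=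
    hXM x x.2 fun a ha => congrArg Subtype.val (LinearMap.congr_fun hx ⟨a, ha⟩)
  let toM : Φ.ker →ₗ[R] M :=
    { toFun x := ⟨x.1, hker x.1 x.2⟩
      map_add' _ _ := rfl
      map_smul' _ _ := rfl }
  have : IsNoetherian R Φ.ker := isNoetherian_of_injective toM fun _ _ h =>
    Subtype.ext (Subtype.ext (congrArg (fun m : M => (m : I)) h))
  exact isNoetherian_of_range_eq_ker Φ.ker.subtype Φ (Submodule.range_subtype _)

theorem IsEssentialExtension.isNoetherian {R : Type*} [CommRing R] [IsArtinianRing R]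
    [Algebra R A] [Module.Finite R A] [Module R I] [IsScalarTower R A I] {M E : Submodule A I}
    [IsNoetherian R M] (h : IsEssentialExtension M E) : IsNoetherian R E := by
  have : IsArtinianRing A := IsArtinianRing.of_finite R A
  have : Module.Finite R (Ring.jacobson A : Ideal A) :=
    Module.IsNoetherian.finite R ((Ring.jacobson A : Ideal A).restrictScalars R)
  have layer (n : ℕ) : ∀ X ≤ E, Ring.jacobson A ^ n • X = ⊥ → IsNoetherian R X := by
    induction n with
    | zero =>
      intro X _ hX
      rw [Submodule.pow_zero, Ideal.one_eq_top, Submodule.top_smul] at hX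
      subst hX
      infer_instance
    | succ n ih =>
      intro X hXE hX
      have := ih (Ring.jacobson A • X) (Submodule.smul_le_right.trans hXE)
        (by rw [← Submodule.mul_smul, ← Submodule.pow_succ, hX])
      exact isNoetherian_of_ideal_smul_le (M := M) le_rfl
        fun x hx hJ => h.mem_of_jacobson_smul_eq_zero (hXE hx) hJ
  obtain ⟨n, hn⟩ := IsSemiprimaryRing.isNilpotent (R := A)
  exact layer n E le_rfl (by rw [hn]; exact Submodule.bot_smul E)

theorem IsEssentialExtension.finite (R : Type*) [CommRing R] [IsArtinianRing R]
    [Algebra R A] [Module.Finite R A] {M E : Submodule A I} [Module.Finite A M]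
    (h : IsEssentialExtension M E) : Module.Finite A E := by
  let _ : Module R I := Module.compHom I (algebraMap R A)
  have : IsScalarTower R A I := ⟨fun r a x => by rw [Algebra.smul_def, mul_smul]; rfl⟩
  have : Module.Finite R M := Module.Finite.trans A M
  have : IsNoetherian R E := h.isNoetherian
  exact Module.Finite.of_restrictScalars_finite R A E

end EssentialExtensions

section InjectiveModules

universe u v

variable {A : Type u} [Ring A] {I N : Type v} [AddCommGroup I] [Module A I] [AddCommGroup N]
  [Module A N]

theorem injective_of_retract [Module.Injective A I] (i : N →ₗ[A] I) (r : I →ₗ[A] N)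
    (hr : r ∘ₗ i = LinearMap.id) : Module.Injective A N := by
  refine ⟨fun X Y _ _ _ _ f hf g => ?_⟩
  obtain ⟨φ, hφ⟩ := Module.Injective.out f hf (i ∘ₗ g)
  exact ⟨r ∘ₗ φ, fun x => by
    rw [LinearMap.comp_apply, hφ]
    exact LinearMap.congr_fun hr (g x)⟩

-- With `C` maximal disjoint from `E`, the inclusion of `E` extends along `E → I ⧸ C` to a map
-- whose image is an essential extension of `E`, hence is `E`.
theorem injective_of_maximal_isEssentialExtension [Module.Injective A I] {M E : Submodule A I}
    (hE : Maximal (IsEssentialExtension M) E) : Module.Injective A E := by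
  obtain ⟨C, hC⟩ := exists_maximal_disjoint E
  have hinj : Function.Injective (C.mkQ ∘ₗ E.subtype) := by
    rw [← LinearMap.ker_eq_bot, LinearMap.ker_comp, Submodule.ker_mkQ,
      ← Submodule.disjoint_iff_comap_eq_bot]
    exact hC.prop
  obtain ⟨φ, hφ⟩ := Module.Injective.out (C.mkQ ∘ₗ E.subtype) hinj E.subtype
  let r : I →ₗ[A] I := φ ∘ₗ C.mkQ
  have hrE (x) (hx : x ∈ E) : r x = x := hφ ⟨x, hx⟩
  have hEr : E ≤ r.range := fun x hx => ⟨x, hrE x hx⟩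
  have hker : C ≤ r.ker := C.ker_mkQ.ge.trans (LinearMap.ker_le_ker_comp C.mkQ φ)
  have hess : IsEssentialExtension M r.range := by
    refine ⟨hE.prop.1.trans hEr, fun Y hY hYM => ?_⟩
    have hYE : Disjoint Y E := disjoint_iff.mpr
      (hE.prop.2 _ inf_le_right (hYM.mono_left inf_le_left))
    have hYC : Y.comap r ≤ C := hC.le_of_ge
      (Submodule.disjoint_def.mpr fun x hxE hxY => Submodule.disjoint_def.mp hYE x
        (hrE x hxE ▸ hxY) hxE)
      (hker.trans (LinearMap.ker_le_comap r))
    refine (Submodule.eq_bot_iff Y).mpr fun y hy => ?_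
    obtain ⟨x, rfl⟩ := hY hy
    exact hker (hYC hy)
  have hrange : r.range ≤ E := hE.le_of_ge hess hEr
  exact injective_of_retract E.subtype (r.codRestrict E fun x => hrange ⟨x, rfl⟩)
    (LinearMap.ext fun x => Subtype.ext (hrE x x.2))

end InjectiveModules

section Covers

/-- Projective covers as linear maps: the surjection `f` from a projective module is essential, no
proper submodule of `P` maps onto `M`. -/
structure IsProjectiveCover {A P M : Type*} [Ring A] [AddCommGroup P] [Module A P]
    [AddCommGroup M] [Module A M] (f : P →ₗ[A] M) : Prop where
  projective : Module.Projective A P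
  surjective : Function.Surjective f
  eq_top : ∀ N : Submodule A P, N.map f = ⊤ → N = ⊤

/-- Injective envelopes as linear maps: the embedding `f` into an injective module is essential,
every nonzero submodule of `I` meets its image. -/
structure IsInjectiveEnvelope {A M I : Type*} [Ring A] [AddCommGroup I] [Module A I]
    [AddCommGroup M] [Module A M] (f : M →ₗ[A] I) : Prop where
  module_injective : Module.Injective A I
  injective : Function.Injective f
  eq_bot : ∀ N : Submodule A I, N.comap f = ⊥ → N = ⊥

-- For `X` minimal among the submodules of `P` mapping onto `M`, a lift `P → X` of `g` restricts
-- to an automorphism of `X`, so `X` is a direct summand of `P`.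
theorem exists_isProjectiveCover_of_surjective {A P M : Type*} [Ring A] [AddCommGroup P]
    [Module A P] [AddCommGroup M] [Module A M] [Module.Projective A P] [IsNoetherian A P]
    [IsArtinian A P] {g : P →ₗ[A] M} (hg : Function.Surjective g) :
    ∃ X : Submodule A P, IsProjectiveCover (g ∘ₗ X.subtype) := by
  obtain ⟨X, hX⟩ := exists_minimal_of_wellFoundedLT (fun X : Submodule A P => X.map g = ⊤)
    ⟨⊤, by rw [Submodule.map_top, LinearMap.range_eq_top.mpr hg]⟩
  have heq (N : Submodule A X) (hN : N.map (g ∘ₗ X.subtype) = ⊤) : N = ⊤ := by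
    rw [Submodule.map_comp] at hN
    have hle : X ≤ N.map X.subtype := hX.le_of_le hN (X.map_subtype_le N)
    refine eq_top_iff.mpr fun x _ => ?_
    obtain ⟨y, hy, hyx⟩ := hle x.2
    exact Subtype.ext hyx ▸ hy
  have hsurj : Function.Surjective (g ∘ₗ X.subtype) := by
    rw [← LinearMap.range_eq_top, LinearMap.range_comp, X.range_subtype]
    exact hX.prop
  obtain ⟨h, hh⟩ := Module.projective_lifting_property (g ∘ₗ X.subtype) g hsurj
  let φ : X →ₗ[A] X := h ∘ₗ X.subtype
  have hφ : Function.Surjective φ := by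
    refine LinearMap.range_eq_top.mp (heq _ ?_)
    rw [← LinearMap.range_comp, ← LinearMap.comp_assoc, hh]
    exact LinearMap.range_eq_top.mpr hsurj
  let e := LinearEquiv.ofBijective φ (IsNoetherian.bijective_of_surjective_endomorphism φ hφ)
  exact ⟨X, Module.Projective.of_split X.subtype (e.symm.toLinearMap ∘ₗ h)
    (LinearMap.ext e.symm_apply_apply), hsurj, heq⟩

variable {A : Type} [Ring A]

theorem isProjectiveCoverHom_iff {P M : ModuleCat.{0} A} (f : P ⟶ M) :
    IsProjectiveCoverHom A f ↔ IsProjectiveCover f.hom := by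
  constructor
  · rintro ⟨hP, hf, hess⟩
    refine ⟨(IsProjective.iff_projective P).mpr hP,
      (ModuleCat.epi_iff_surjective f).mp hf, fun N hN => ?_⟩
    have := hess (ModuleCat.of A N) (ModuleCat.ofHom N.subtype) <| by
      rw [ModuleCat.epi_iff_range_eq_top]
      exact (LinearMap.range_comp _ _).trans ((congrArg _ N.range_subtype).trans hN)
    exact N.range_subtype.symm.trans (LinearMap.range_eq_top.mpr
      ((ModuleCat.epi_iff_surjective _).mp this))
  · rintro ⟨hP, hf, hess⟩
    refine ⟨(IsProjective.iff_projective P).mp hP,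
      (ModuleCat.epi_iff_surjective f).mpr hf, fun N g hg => ?_⟩
    rw [ModuleCat.epi_iff_range_eq_top] at hg ⊢
    exact hess _ ((LinearMap.range_comp _ _).symm.trans hg)

theorem isInjectiveEnvelopeHom_iff {M I : ModuleCat.{0} A} (f : M ⟶ I) :
    IsInjectiveEnvelopeHom A f ↔ IsInjectiveEnvelope f.hom := by
  constructor
  · rintro ⟨hI, hf, hess⟩
    refine ⟨(Module.injective_iff_injective_object A I).mpr hI,
      (ModuleCat.mono_iff_injective f).mp hf, fun N hN => ?_⟩
    have := hess (ModuleCat.of A (I ⧸ N)) (ModuleCat.ofHom N.mkQ) <| by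
      rw [ModuleCat.mono_iff_ker_eq_bot]
      exact (LinearMap.ker_comp _ _).trans ((congrArg _ N.ker_mkQ).trans hN)
    exact N.ker_mkQ.symm.trans (LinearMap.ker_eq_bot.mpr
      ((ModuleCat.mono_iff_injective _).mp this))
  · rintro ⟨hI, hf, hess⟩
    refine ⟨(Module.injective_iff_injective_object A I).mp hI,
      (ModuleCat.mono_iff_injective f).mpr hf, fun N g hg => ?_⟩
    rw [ModuleCat.mono_iff_ker_eq_bot] at hg ⊢
    exact hess _ ((LinearMap.ker_comp _ _).symm.trans hg)

variable (M : Type) [AddCommGroup M] [Module A M] [Module.Finite A M]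

theorem exists_isProjectiveCover [IsArtinianRing A] :
    ∃ (P : ModuleCat.{0} A) (f : P →ₗ[A] M), Module.Finite A P ∧ IsProjectiveCover f := by
  obtain ⟨k, g, hg⟩ := Module.Finite.exists_fin' A M
  obtain ⟨X, hX⟩ := exists_isProjectiveCover_of_surjective hg
  exact ⟨ModuleCat.of A X, g ∘ₗ X.subtype, inferInstanceAs (Module.Finite A X), hX⟩

theorem exists_isInjectiveEnvelope (R : Type) [CommRing R] [IsArtinianRing R] [Algebra R A]
    [Module.Finite R A] :
    ∃ (I : ModuleCat.{0} A) (f : M →ₗ[A] I), Module.Finite A I ∧ IsInjectiveEnvelope f := by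
  obtain ⟨p⟩ := EnoughInjectives.presentation (ModuleCat.of A M)
  have hp : Function.Injective p.f.hom := (ModuleCat.mono_iff_injective _).mp p.mono
  have : Module.Injective A p.J := (Module.injective_iff_injective_object A p.J).mpr p.injective
  obtain ⟨E, hE⟩ := exists_maximal_isEssentialExtension p.f.hom.range
  let f : M →ₗ[A] E := p.f.hom.codRestrict E fun x => hE.prop.1 ⟨x, rfl⟩
  refine ⟨ModuleCat.of A E, f, hE.prop.finite R, injective_of_maximal_isEssentialExtension hE,
    fun x y h => hp (Subtype.ext_iff.mp h), fun N hN => ?_⟩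
  have hdisj : Disjoint (N.map E.subtype) p.f.hom.range := by
    refine Submodule.disjoint_def.mpr ?_
    rintro _ ⟨y, hy, rfl⟩ ⟨x, hx⟩
    obtain rfl : f x = y := Subtype.ext hx
    have hxN : x ∈ N.comap f := hy
    rw [hN, Submodule.mem_bot] at hxN
    rw [hxN, map_zero, map_zero]
  exact Submodule.map_injective_of_injective E.injective_subtype
    ((hE.prop.2 _ (E.map_subtype_le N) hdisj).trans (Submodule.map_bot _).symm)

end Covers

section ProjectiveHorseshoe

variable {A X Y Z : Type*} [Ring A] [AddCommGroup X] [AddCommGroup Y] [AddCommGroup Z]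
variable [Module A X] [Module A Y] [Module A Z] {i : X →ₗ[A] Y} {p : Y →ₗ[A] Z}

-- Schanuel's argument with `c` in place of a second projective presentation of `Z`.
theorem exists_retract_ker_prod [Module.Projective A Y] (hi : Function.Injective i)
    (hp : Function.Surjective p) (hip : Function.Exact i p) {P : Type*} [AddCommGroup P]
    [Module A P] [Module.Projective A P] {c : P →ₗ[A] Z} (hc : Function.Surjective c) :
    ∃ (j : X →ₗ[A] LinearMap.ker c × Y) (r : LinearMap.ker c × Y →ₗ[A] X),
      r ∘ₗ j = LinearMap.id := by
  obtain ⟨s, hs⟩ := Module.projective_lifting_property c p hc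
  obtain ⟨t, ht⟩ := Module.projective_lifting_property p c hp
  have hs (y : Y) : c (s y) = p y := LinearMap.congr_fun hs y
  have ht (y : P) : p (t y) = c y := LinearMap.congr_fun ht y
  let e : X ≃ₗ[A] LinearMap.ker p := (LinearEquiv.ofInjective i hi).trans
    (LinearEquiv.ofEq _ _ (LinearMap.exact_iff.mp hip).symm)
  let r₀ : LinearMap.ker c × Y →ₗ[A] Y :=
    LinearMap.coprod (t ∘ₗ (LinearMap.ker c).subtype) (LinearMap.id - t ∘ₗ s)
  have hr₀ (x) : r₀ x ∈ LinearMap.ker p := by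
    have hx : c x.1 = 0 := x.1.2
    simp [r₀, ht, hs, hx]
  have hsi (x : X) : s (i x) ∈ LinearMap.ker c := by
    rw [LinearMap.mem_ker, hs, hip.apply_apply_eq_zero]
  refine ⟨((s ∘ₗ i).codRestrict _ hsi).prod i, e.symm ∘ₗ r₀.codRestrict _ hr₀,
    LinearMap.ext fun x => e.symm_apply_eq.mpr (Subtype.ext ?_)⟩
  change t (s (i x)) + (i x - t (s (i x))) = i x
  abel

theorem exists_exact_ker_horseshoe (hi : Function.Injective i) (hp : Function.Surjective p)
    (hip : Function.Exact i p) {P Q : Type*} [AddCommGroup P] [Module A P] [AddCommGroup Q]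
    [Module A Q] [Module.Projective A Q] {a : P →ₗ[A] X} (ha : Function.Surjective a)
    {b : Q →ₗ[A] Z} (hb : Function.Surjective b) :
    ∃ (q : P × Q →ₗ[A] Y) (i' : LinearMap.ker a →ₗ[A] LinearMap.ker q)
      (p' : LinearMap.ker q →ₗ[A] LinearMap.ker b), Function.Surjective q ∧
      Function.Injective i' ∧ Function.Surjective p' ∧ Function.Exact i' p' := by
  obtain ⟨t, ht⟩ := Module.projective_lifting_property p b hp
  have ht (y : Q) : p (t y) = b y := LinearMap.congr_fun ht y
  have hpi (x : X) : p (i x) = 0 := hip.apply_apply_eq_zero x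
  let q : P × Q →ₗ[A] Y := LinearMap.coprod (i ∘ₗ a) t
  have hq (x : P × Q) : q x = i (a x.1) + t x.2 := rfl
  have hpq (x : P × Q) : p (q x) = b x.2 := by rw [hq, map_add, hpi, zero_add, ht]
  have lift (y : Y) (z : Q) (h : b z = p y) : ∃ x, q (x, z) = y := by
    obtain ⟨x, hx⟩ := (hip (y - t z)).mp (by rw [map_sub, ht, h, sub_self])
    obtain ⟨w, rfl⟩ := ha x
    exact ⟨w, by rw [hq, hx, sub_add_cancel]⟩
  refine ⟨q, (LinearMap.inl A P Q).restrict fun x (hx : a x = 0) => ?_,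
    (LinearMap.snd A P Q).restrict fun x (hx : q x = 0) => ?_, ?_, ?_, ?_, ?_⟩
  · rw [LinearMap.mem_ker, hq]
    simp [hx]
  · rw [LinearMap.mem_ker, LinearMap.snd_apply, ← hpq, hx, map_zero]
  · intro y
    obtain ⟨z, hz⟩ := hb (p y)
    obtain ⟨x, hx⟩ := lift y z hz
    exact ⟨(x, z), hx⟩
  · exact fun x y hxy => Subtype.ext (congrArg (fun w => w.1.1) hxy)
  · rintro ⟨z, hz : b z = 0⟩
    obtain ⟨x, hx⟩ := lift 0 z (by rw [hz, map_zero])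
    exact ⟨⟨(x, z), hx⟩, rfl⟩
  · rintro ⟨⟨x, z⟩, hx : q (x, z) = 0⟩
    refine ⟨fun h => ?_, fun ⟨w, hw⟩ => ?_⟩
    · obtain rfl : z = 0 := congrArg Subtype.val h
      exact ⟨⟨x, hi (by simpa [hq] using hx)⟩, rfl⟩
    · exact Subtype.ext (congrArg (fun w => w.1.2) hw).symm

end ProjectiveHorseshoe

section InjectiveHorseshoe

universe u v

variable {A : Type u} {X Y Z : Type v} [Ring A] [AddCommGroup X] [AddCommGroup Y] [AddCommGroup Z]
variable [Module A X] [Module A Y] [Module A Z] {i : X →ₗ[A] Y} {p : Y →ₗ[A] Z}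

theorem exists_retract_quotient_range_prod [Module.Injective A Y] (hi : Function.Injective i)
    (hp : Function.Surjective p) (hip : Function.Exact i p) {I : Type v} [AddCommGroup I]
    [Module A I] [Module.Injective A I] {c : X →ₗ[A] I} (hc : Function.Injective c) :
    ∃ (j : Z →ₗ[A] (I ⧸ LinearMap.range c) × Y) (r : (I ⧸ LinearMap.range c) × Y →ₗ[A] Z),
      r ∘ₗ j = LinearMap.id := by
  obtain ⟨s, hs⟩ := Module.Injective.out c hc i
  obtain ⟨t, ht⟩ := Module.Injective.out i hi c
  let e : (Y ⧸ LinearMap.range i) ≃ₗ[A] Z :=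
    (Submodule.quotEquivOfEq _ _ (LinearMap.exact_iff.mp hip).symm).trans
      (p.quotKerEquivOfSurjective hp)
  let j₀ : Y →ₗ[A] (I ⧸ LinearMap.range c) × Y :=
    ((LinearMap.range c).mkQ ∘ₗ t).prod (LinearMap.id - s ∘ₗ t)
  have hj₀ : LinearMap.range i ≤ LinearMap.ker j₀ := by
    rintro _ ⟨x, rfl⟩
    simp [j₀, ht, hs]
  have hr : LinearMap.range c ≤ LinearMap.ker (p ∘ₗ s) := by
    rintro _ ⟨x, rfl⟩
    rw [LinearMap.mem_ker, LinearMap.comp_apply, hs, hip.apply_apply_eq_zero]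
  refine ⟨(LinearMap.range i).liftQ j₀ hj₀ ∘ₗ e.symm,
    LinearMap.coprod ((LinearMap.range c).liftQ _ hr) p, LinearMap.ext fun z => ?_⟩
  obtain ⟨y, rfl⟩ := hp z
  have hy : e.symm (p y) = (LinearMap.range i).mkQ y := e.symm_apply_eq.mpr rfl
  change LinearMap.coprod _ p ((LinearMap.range i).liftQ j₀ hj₀ (e.symm (p y))) = p y
  rw [hy]
  change p (s (t y)) + p (y - s (t y)) = p y
  rw [map_sub, add_sub_cancel]

theorem injective_prod_comp_of_exact (hip : Function.Exact i p) {I J : Type v} [AddCommGroup I]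
    [Module A I] [AddCommGroup J] [Module A J] {a : X →ₗ[A] I} (ha : Function.Injective a)
    {b : Z →ₗ[A] J} (hb : Function.Injective b) {t : Y →ₗ[A] I} (ht : ∀ x, t (i x) = a x) :
    Function.Injective (t.prod (b ∘ₗ p)) := by
  refine (injective_iff_map_eq_zero _).mpr fun y hy => ?_
  have hpy : p y = 0 := hb ((congrArg Prod.snd hy).trans (map_zero b).symm)
  obtain ⟨x, rfl⟩ := (hip y).mp hpy
  have hx : x = 0 := ha ((ht x).symm.trans ((congrArg Prod.fst hy).trans (map_zero a).symm))
  rw [hx, map_zero]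

theorem exists_exact_quotient_range_horseshoe (hi : Function.Injective i)
    (hp : Function.Surjective p) (hip : Function.Exact i p) {I J : Type v} [AddCommGroup I]
    [Module A I] [Module.Injective A I] [AddCommGroup J] [Module A J] {a : X →ₗ[A] I}
    (ha : Function.Injective a) {b : Z →ₗ[A] J} (hb : Function.Injective b) :
    ∃ (q : Y →ₗ[A] I × J) (i' : I ⧸ LinearMap.range a →ₗ[A] (I × J) ⧸ LinearMap.range q)
      (p' : (I × J) ⧸ LinearMap.range q →ₗ[A] J ⧸ LinearMap.range b), Function.Injective q ∧
      Function.Injective i' ∧ Function.Surjective p' ∧ Function.Exact i' p' := by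
  obtain ⟨t, ht⟩ := Module.Injective.out i hi a
  have hpi (x : X) : p (i x) = 0 := hip.apply_apply_eq_zero x
  let q : Y →ₗ[A] I × J := t.prod (b ∘ₗ p)
  have hq (y : Y) : q y = (t y, b (p y)) := rfl
  have lift (y : Y) (h : b (p y) = 0) : ∃ x, i x = y :=
    (hip y).mp (hb (by rw [h, map_zero]))
  refine ⟨q, Submodule.mapQ _ _ (LinearMap.inl A I J) ?_,
    Submodule.mapQ _ _ (LinearMap.snd A I J) ?_, ?_, ?_, ?_, ?_⟩
  · rintro _ ⟨x, rfl⟩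
    exact ⟨i x, by simp [hq, ht, hpi]⟩
  · rintro _ ⟨y, rfl⟩
    exact ⟨p y, rfl⟩
  · exact injective_prod_comp_of_exact hip ha hb ht
  · refine (injective_iff_map_eq_zero _).mpr fun w hw => ?_
    obtain ⟨x, rfl⟩ := Submodule.mkQ_surjective _ w
    obtain ⟨y, hy⟩ := (Submodule.Quotient.mk_eq_zero _).mp hw
    obtain ⟨x', rfl⟩ := lift y (congrArg Prod.snd hy)
    exact (Submodule.Quotient.mk_eq_zero _).mpr ⟨x', (ht x').symm.trans (congrArg Prod.fst hy)⟩
  · intro w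
    obtain ⟨z, rfl⟩ := Submodule.mkQ_surjective _ w
    exact ⟨Submodule.mkQ _ (0, z), rfl⟩
  · intro w
    obtain ⟨⟨x, z⟩, rfl⟩ := Submodule.mkQ_surjective _ w
    refine ⟨fun h => ?_, fun ⟨v, hv⟩ => ?_⟩
    · obtain ⟨z, rfl⟩ := (Submodule.Quotient.mk_eq_zero _).mp h
      obtain ⟨y, rfl⟩ := hp z
      refine ⟨Submodule.mkQ _ (x - t y), (Submodule.Quotient.eq _).mpr ⟨-y, ?_⟩⟩
      exact Prod.ext (by simp [hq]) (by simp [hq])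
    · obtain ⟨x', rfl⟩ := Submodule.mkQ_surjective _ v
      rw [← hv]
      exact (Submodule.Quotient.mk_eq_zero _).mpr (zero_mem _)

end InjectiveHorseshoe

section Representatives

theorem exists_injective_pi {A M Q : Type*} [Ring A] [AddCommGroup M] [Module A M]
    [AddCommGroup Q] [Module A Q] [IsArtinian A M]
    (h : ∀ x : M, x ≠ 0 → ∃ g : M →ₗ[A] Q, g x ≠ 0) :
    ∃ (n : ℕ) (σ : M →ₗ[A] (Fin n → Q)), Function.Injective σ := by
  obtain ⟨s, hs⟩ := Finset.exists_inf_le fun g : M →ₗ[A] Q => LinearMap.ker g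
  let e := s.equivFin
  refine ⟨s.card, LinearMap.pi fun j => e.symm j, (injective_iff_map_eq_zero _).mpr fun x hx =>
    by_contra fun hx0 => ?_⟩
  obtain ⟨g, hg⟩ := h x hx0
  refine hg (hs g (Submodule.mem_finsetInf.mpr fun g hg => ?_))
  simpa [e] using congrFun hx (e ⟨g, hg⟩)

theorem exists_linearEquiv_submodule_quotient_jacobson {A : Type*} [Ring A] [IsArtinianRing A]
    (T : Type*) [AddCommGroup T] [Module A T] [IsSimpleModule A T] :
    ∃ S : Submodule A (A ⧸ Module.jacobson A A), Nonempty (T ≃ₗ[A] S) := by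
  have : IsSemisimpleModule A (A ⧸ Module.jacobson A A) :=
    (IsArtinian.isSemisimpleModule_iff_jacobson _ _).mpr (Module.jacobson_quotient_jacobson A A)
  obtain ⟨I, hI, ⟨e⟩⟩ := isSimpleModule_iff_quot_maximal.mp ‹IsSimpleModule A T›
  have hJI : Module.jacobson A A ≤ I := sInf_le hI.out
  obtain ⟨S, ⟨e'⟩⟩ := IsSemisimpleModule.exists_submodule_linearEquiv_quotient
    (Submodule.map (Module.jacobson A A).mkQ I)
  exact ⟨S, ⟨e ≪≫ₗ (Submodule.quotientQuotientEquivQuotient _ I hJI).symm ≪≫ₗ e'.symm⟩⟩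

-- The index set is the set of isotypic components of the semisimple module `A / rad A`.
theorem exists_simple_representatives (A : Type) [Ring A] [IsArtinianRing A] :
    ∃ (ι : Type) (_ : Fintype ι) (S : ι → ModuleCat.{0} A), (∀ i, IsSimpleModule A (S i)) ∧
      ∀ T : ModuleCat.{0} A, IsSimpleModule A T → ∃! i, Nonempty (T ≃ₗ[A] S i) := by
  let M := A ⧸ Module.jacobson A A
  have hS (c : isotypicComponents A M) := c.2.choose_spec
  have hsimple (c : isotypicComponents A M) : IsSimpleModule A c.2.choose := (hS c).1
  refine ⟨isotypicComponents A M, Fintype.ofFinite _, fun c => ModuleCat.of A c.2.choose, hsimple,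
    fun T hT => ?_⟩
  obtain ⟨T', ⟨e⟩⟩ := exists_linearEquiv_submodule_quotient_jacobson (A := A) T
  have hT' : IsSimpleModule A T' := .congr e.symm
  let c : isotypicComponents A M := ⟨isotypicComponent A M T', T', hT', rfl⟩
  have hc : T' ≤ isotypicComponent A M c.2.choose := (hS c).2 ▸ T'.le_isotypicComponent
  have (m : {m : Submodule A M | Nonempty (m ≃ₗ[A] c.2.choose)}) : IsSimpleModule A m :=
    .congr m.2.some
  obtain ⟨S, ⟨f⟩, ⟨g⟩⟩ := T'.linearEquiv_of_le_sSup _ hc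
  refine ⟨c, ⟨e ≪≫ₗ g ≪≫ₗ f⟩, fun c' ⟨e'⟩ => Subtype.ext ?_⟩
  rw [(hS c').2, ← (e.symm ≪≫ₗ e').isotypicComponent_eq]

theorem exists_isMinimalInjectiveCogenerator {A : Type} [Ring A] (R : Type) [CommRing R]
    [IsArtinianRing R] [Algebra R A] [Module.Finite R A] :
    ∃ Q : ModuleCat.{0} A, IsMinimalInjectiveCogenerator A Q := by
  have : IsArtinianRing A := IsArtinianRing.of_finite R A
  obtain ⟨ι, hι, S, hS, hS'⟩ := exists_simple_representatives A
  obtain ⟨Q, f, -, hf⟩ := exists_isInjectiveEnvelope (A := A) (∀ i, S i) R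
  exact ⟨Q, ι, hι, S, hS, hS', ModuleCat.ofHom f, (isInjectiveEnvelopeHom_iff _).mpr hf⟩

theorem IsMinimalInjectiveCogenerator.exists_injective_pi {A : Type} [Ring A]
    {Q : ModuleCat.{0} A} (hQ : IsMinimalInjectiveCogenerator A Q) (M : Type) [AddCommGroup M]
    [Module A M] [IsArtinian A M] :
    ∃ (n : ℕ) (σ : M →ₗ[A] (Fin n → Q)), Function.Injective σ := by
  classical
  refine ArtinAlg.exists_injective_pi fun x hx => ?_
  obtain ⟨ι, _, S, -, hS, f, hf⟩ := hQ
  have hf := (isInjectiveEnvelopeHom_iff f).mp hf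
  have := hf.module_injective
  have : IsAtomic (Submodule A M) := isAtomic_of_orderBot_wellFounded_lt wellFounded_lt
  obtain ⟨T, hT, hTx⟩ := (IsAtomic.eq_bot_or_exists_atom_le (Submodule.span A {x})).resolve_left
    (Submodule.span_singleton_eq_bot.not.mpr hx)
  have hTs : IsSimpleModule A T := isSimpleModule_iff_isAtom.mpr hT
  obtain ⟨i, ⟨e⟩, -⟩ := hS (ModuleCat.of A T) hTs
  let g₀ : T →ₗ[A] Q := f.hom ∘ₗ LinearMap.single A (fun i => S i) i ∘ₗ e.toLinearMap
  have hg₀ : Function.Injective g₀ :=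
    hf.injective.comp ((Pi.single_injective (M := fun i => S i) i).comp e.injective)
  obtain ⟨g, hg⟩ := Module.Injective.out T.subtype T.injective_subtype g₀
  refine ⟨g, fun hgx => hT.1 ((Submodule.eq_bot_iff T).mpr fun y hy => ?_)⟩
  have hgT : T ≤ LinearMap.ker g :=
    hTx.trans ((Submodule.span_singleton_le_iff_mem x _).mpr hgx)
  exact congrArg Subtype.val
    (hg₀ (((hg ⟨y, hy⟩).symm.trans (hgT hy)).trans (map_zero g₀).symm))

end Representatives

section LevelLeDimension

variable {A X Y Z : Type} [Ring A] [AddCommGroup X] [AddCommGroup Y] [AddCommGroup Z]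
variable [Module A X] [Module A Y] [Module A Z] {i : X →ₗ[A] Y} {p : Y →ₗ[A] Z}

theorem IsProjectiveCover.isSyzygyOf {f : X →ₗ[A] Y} (h : IsProjectiveCover f) :
    IsSyzygyOf A (ModuleCat.of A Y) (ModuleCat.of A (LinearMap.ker f)) :=
  ⟨ModuleCat.of A X, ModuleCat.ofHom f, (isProjectiveCoverHom_iff _).mpr h,
    ⟨(ModuleCat.kernelIsoKer (ModuleCat.ofHom f)).symm⟩⟩

theorem IsInjectiveEnvelope.isCosyzygyOf {f : X →ₗ[A] Y} (h : IsInjectiveEnvelope f) :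
    IsCosyzygyOf A (ModuleCat.of A X) (ModuleCat.of A (Y ⧸ LinearMap.range f)) :=
  ⟨ModuleCat.of A Y, ModuleCat.ofHom f, (isInjectiveEnvelopeHom_iff _).mpr h,
    ⟨(ModuleCat.cokernelIsoRangeQuotient (ModuleCat.ofHom f)).symm⟩⟩

theorem hasProjectiveDimensionLT_one_iff :
    HasProjectiveDimensionLT (ModuleCat.of A X) 1 ↔ Module.Projective A X :=
  projective_iff_hasProjectiveDimensionLT_one.symm.trans (IsProjective.iff_projective X).symm

theorem hasInjectiveDimensionLT_one_iff :
    HasInjectiveDimensionLT (ModuleCat.of A X) 1 ↔ Module.Injective A X :=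
  injective_iff_hasInjectiveDimensionLT_one.symm.trans
    (Module.injective_iff_injective_object A X).symm

instance [Module.Injective A X] [Module.Injective A Y] : Module.Injective A (X × Y) where
  out _ _ _ _ _ _ f hf g := by
    obtain ⟨a, ha⟩ := Module.Injective.out f hf (LinearMap.fst A X Y ∘ₗ g)
    obtain ⟨b, hb⟩ := Module.Injective.out f hf (LinearMap.snd A X Y ∘ₗ g)
    exact ⟨a.prod b, fun x => Prod.ext (ha x) (hb x)⟩

theorem inAdd_prod_of_retract {B : Type} [AddCommGroup B] [Module A B] {n : ℕ}
    {σ : Y →ₗ[A] (Fin n → B)} {π : (Fin n → B) →ₗ[A] Y} (hπ : π ∘ₗ σ = LinearMap.id)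
    {j : X →ₗ[A] Z × Y} {r : Z × Y →ₗ[A] X} (hr : r ∘ₗ j = LinearMap.id) :
    InAdd A (ModuleCat.of A X) (ModuleCat.of A (B × Z)) := by
  let j' : (Z × Y) →ₗ[A] (Fin (n + 1) → B × Z) :=
    LinearMap.pi (Fin.cons (α := fun _ => (Z × Y) →ₗ[A] B × Z)
      (LinearMap.prod 0 (LinearMap.fst A Z Y))
      fun k => LinearMap.prod (LinearMap.proj k ∘ₗ σ ∘ₗ LinearMap.snd A Z Y) 0)
  let r' : (Fin (n + 1) → B × Z) →ₗ[A] (Z × Y) :=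
    LinearMap.prod (LinearMap.snd A B Z ∘ₗ LinearMap.proj 0)
      (π ∘ₗ LinearMap.pi fun k => LinearMap.fst A B Z ∘ₗ LinearMap.proj k.succ)
  have hr' (x : Z × Y) : r' (j' x) = x := Prod.ext rfl (LinearMap.congr_fun hπ x.2)
  refine ⟨n + 1, ModuleCat.ofHom (j' ∘ₗ j), ModuleCat.ofHom (r ∘ₗ r'), ?_⟩
  ext x
  exact (congrArg r (hr' _)).trans (LinearMap.congr_fun hr x)

-- Induction on `m`, the case `m = 0` being Schanuel's lemma: an exact sequence of syzygies
-- `0 → Ω X → Y' → Ω Z → 0` has `pd Y' < pd Y`.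
theorem exists_inAdd_nthSyzygy [IsArtinianRing A] [Module.Finite A X] [Module.Finite A Y]
    [Module.Finite A Z] (hi : Function.Injective i) (hp : Function.Surjective p)
    (hip : Function.Exact i p) {m : ℕ} (hY : HasProjectiveDimensionLT (ModuleCat.of A Y) (m + 1)) :
    ∃ X' Z' : ModuleCat.{0} A, IsNthSyzygy A m (ModuleCat.of A X) X' ∧
      IsNthSyzygy A (m + 1) (ModuleCat.of A Z) Z' ∧ InAdd A X' (ModuleCat.of A (A × Z')) := by
  induction m generalizing X Y Z with
  | zero =>
    obtain ⟨Q, b, _, hb⟩ := exists_isProjectiveCover (A := A) Z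
    have := hb.projective
    have := hasProjectiveDimensionLT_one_iff.mp hY
    obtain ⟨n, π, hπ⟩ := Module.Finite.exists_fin' A Y
    obtain ⟨σ, hσ⟩ := Module.projective_lifting_property π LinearMap.id hπ
    obtain ⟨j, r, hr⟩ := exists_retract_ker_prod hi hp hip hb.surjective
    exact ⟨_, _, ⟨Iso.refl _⟩, ⟨_, hb.isSyzygyOf, ⟨Iso.refl _⟩⟩, inAdd_prod_of_retract hσ hr⟩
  | succ m ih =>
    obtain ⟨P, a, _, ha⟩ := exists_isProjectiveCover (A := A) X
    have := ha.projective
    obtain ⟨Q, b, _, hb⟩ := exists_isProjectiveCover (A := A) Z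
    have := hb.projective
    obtain ⟨q, i', p', hq, hi', hp', hip'⟩ :=
      exists_exact_ker_horseshoe hi hp hip ha.surjective hb.surjective
    have hK : HasProjectiveDimensionLT (ModuleCat.of A (LinearMap.ker q)) (m + 1) := by
      have hP : HasProjectiveDimensionLT (ModuleCat.of A (P × Q)) 1 :=
        hasProjectiveDimensionLT_one_iff.mpr inferInstance
      exact (shortExact_of_exact (LinearMap.ker q).injective_subtype hq
        q.exact_subtype_ker_map).hasProjectiveDimensionLT_X₁ (m + 1)
          (hasProjectiveDimensionLT_of_ge _ 1 _ (by omega)) hY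
    obtain ⟨X', Z', hX', hZ', hadd⟩ := ih hi' hp' hip' hK
    exact ⟨X', Z', ⟨_, ha.isSyzygyOf, hX'⟩, ⟨_, hb.isSyzygyOf, hZ'⟩, hadd⟩

theorem exists_inAdd_nthCosyzygy (R : Type) [CommRing R] [IsArtinianRing R] [Algebra R A]
    [Module.Finite R A] [Module.Finite A X] [Module.Finite A Y] [Module.Finite A Z]
    {Q : ModuleCat.{0} A} (hQ : IsMinimalInjectiveCogenerator A Q)
    (hi : Function.Injective i) (hp : Function.Surjective p)
    (hip : Function.Exact i p) {m : ℕ} (hY : HasInjectiveDimensionLT (ModuleCat.of A Y) (m + 1)) :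
    ∃ Z' X' : ModuleCat.{0} A, IsNthCosyzygy A m (ModuleCat.of A Z) Z' ∧
      IsNthCosyzygy A (m + 1) (ModuleCat.of A X) X' ∧ InAdd A Z' (ModuleCat.of A (Q × X')) := by
  have : IsArtinianRing A := IsArtinianRing.of_finite R A
  induction m generalizing X Y Z with
  | zero =>
    obtain ⟨I, a, _, ha⟩ := exists_isInjectiveEnvelope (A := A) X R
    have := ha.module_injective
    have := hasInjectiveDimensionLT_one_iff.mp hY
    obtain ⟨n, σ, hσ⟩ := hQ.exists_injective_pi Y
    obtain ⟨π, hπ⟩ := Module.Injective.out σ hσ LinearMap.id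
    obtain ⟨j, r, hr⟩ := exists_retract_quotient_range_prod hi hp hip ha.injective
    exact ⟨_, _, ⟨Iso.refl _⟩, ⟨_, ha.isCosyzygyOf, ⟨Iso.refl _⟩⟩,
      inAdd_prod_of_retract (LinearMap.ext hπ) hr⟩
  | succ m ih =>
    obtain ⟨I, a, _, ha⟩ := exists_isInjectiveEnvelope (A := A) X R
    have := ha.module_injective
    obtain ⟨J, b, _, hb⟩ := exists_isInjectiveEnvelope (A := A) Z R
    have := hb.module_injective
    obtain ⟨q, i', p', hq, hi', hp', hip'⟩ :=
      exists_exact_quotient_range_horseshoe hi hp hip ha.injective hb.injective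
    have hK : HasInjectiveDimensionLT (ModuleCat.of A ((I × J) ⧸ LinearMap.range q)) (m + 1) := by
      have hI : HasInjectiveDimensionLT (ModuleCat.of A (I × J)) 1 :=
        hasInjectiveDimensionLT_one_iff.mpr inferInstance
      exact (shortExact_of_exact hq (Submodule.mkQ_surjective _)
        (LinearMap.exact_map_mkQ_range q)).hasInjectiveDimensionLT_X₃ (m + 1)
          (hasInjectiveDimensionLT_of_ge _ 1 _ (by omega)) hY
    obtain ⟨Z', X', hZ', hX', hadd⟩ := ih hi' hp' hip' hK
    exact ⟨Z', X', ⟨_, hb.isCosyzygyOf, hZ'⟩, ⟨_, ha.isCosyzygyOf, hX'⟩, hadd⟩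

theorem delLevel_le_projDim [IsArtinianRing A] {S M : ModuleCat.{0} A} [Module.Finite A M]
    {i : S →ₗ[A] M} (hi : Function.Injective i) : delLevel A S ≤ projDim A M := by
  rcases eq_or_ne (projDim A M) ⊤ with h | h
  · exact h ▸ le_top
  obtain ⟨n, hn⟩ := ENat.ne_top_iff_exists.mp h
  have : Module.Finite A S := Module.Finite.of_injective i hi
  obtain ⟨X, Z, hX, hZ, hadd⟩ := exists_inAdd_nthSyzygy hi (LinearMap.range i).mkQ_surjective
    (LinearMap.exact_map_mkQ_range i) ((projDim_le_iff n M).mp hn.ge)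
  rw [← hn]
  exact sInf_le ⟨n, rfl, X, hX, ModuleCat.of A (M ⧸ LinearMap.range i),
    inferInstanceAs (Module.Finite A (M ⧸ LinearMap.range i)), Z, hZ, hadd⟩

theorem desLevel_le_injDim (R : Type) [CommRing R] [IsArtinianRing R] [Algebra R A]
    [Module.Finite R A] {S M : ModuleCat.{0} A} [Module.Finite A M] {p : M →ₗ[A] S}
    (hp : Function.Surjective p) : desLevel A S ≤ injDim A M := by
  rcases eq_or_ne (injDim A M) ⊤ with h | h
  · exact h ▸ le_top
  have : IsArtinianRing A := IsArtinianRing.of_finite R A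
  obtain ⟨n, hn⟩ := ENat.ne_top_iff_exists.mp h
  have : Module.Finite A S := Module.Finite.of_surjective p hp
  obtain ⟨Q, hQ⟩ := exists_isMinimalInjectiveCogenerator (A := A) R
  obtain ⟨Z, X, hZ, hX, hadd⟩ := exists_inAdd_nthCosyzygy R hQ (LinearMap.ker p).injective_subtype
    hp p.exact_subtype_ker_map ((injDim_le_iff n M).mp hn.ge)
  rw [← hn]
  exact sInf_le ⟨n, rfl, Z, hZ, Q, hQ, ModuleCat.of A (LinearMap.ker p),
    inferInstanceAs (Module.Finite A (LinearMap.ker p)), X, hX, hadd⟩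

end LevelLeDimension

section Factorization

variable {A : Type*} [Ring A] {L M N : Type*} [AddCommGroup L] [Module A L] [AddCommGroup M]
  [Module A M] [AddCommGroup N] [Module A N]

theorem exists_comp_eq_of_ker_le {p : M →ₗ[A] N} (hp : Function.Surjective p) {g : M →ₗ[A] L}
    (h : LinearMap.ker p ≤ LinearMap.ker g) : ∃ k : N →ₗ[A] L, k ∘ₗ p = g := by
  refine ⟨(LinearMap.ker p).liftQ g h ∘ₗ (p.quotKerEquivOfSurjective hp).symm, ?_⟩
  ext x
  rw [LinearMap.comp_apply, LinearMap.comp_apply, LinearEquiv.coe_coe,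
    ← p.quotKerEquivOfSurjective_apply_mk hp x, LinearEquiv.symm_apply_apply,
    Submodule.liftQ_apply]

theorem exists_comp_eq_of_range_le {i : M →ₗ[A] N} (hi : Function.Injective i) {g : L →ₗ[A] N}
    (h : LinearMap.range g ≤ LinearMap.range i) : ∃ k : L →ₗ[A] M, i ∘ₗ k = g :=
  ⟨(LinearEquiv.ofInjective i hi).symm ∘ₗ g.codRestrict _ fun x => h (g.mem_range_self x),
    LinearMap.ext fun x =>
      LinearEquiv.ofInjective_symm_apply (h := hi) (x := ⟨g x, h (g.mem_range_self x)⟩)⟩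

theorem nonempty_linearEquiv_of_ker_le [IsSimpleModule A N] [IsSimpleModule A L] {p : M →ₗ[A] N}
    (hp : Function.Surjective p) {g : M →ₗ[A] L} (h : LinearMap.ker p ≤ LinearMap.ker g)
    (hg : g ≠ 0) : Nonempty (N ≃ₗ[A] L) := by
  obtain ⟨k, rfl⟩ := exists_comp_eq_of_ker_le hp h
  exact ⟨LinearEquiv.ofBijective k <| k.bijective_or_eq_zero.resolve_right fun hk =>
    hg (by rw [hk, LinearMap.zero_comp])⟩

theorem nonempty_linearEquiv_of_range_le [IsSimpleModule A M] [IsSimpleModule A L] {i : M →ₗ[A] N}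
    (hi : Function.Injective i) {g : L →ₗ[A] N} (h : LinearMap.range g ≤ LinearMap.range i)
    (hg : g ≠ 0) : Nonempty (L ≃ₗ[A] M) := by
  obtain ⟨k, rfl⟩ := exists_comp_eq_of_range_le hi h
  exact ⟨LinearEquiv.ofBijective k <| k.bijective_or_eq_zero.resolve_right fun hk =>
    hg (by rw [hk, LinearMap.comp_zero])⟩

variable {L' M' N' : Type*} [AddCommGroup L'] [Module A L'] [AddCommGroup M'] [Module A M']
  [AddCommGroup N'] [Module A N']

theorem nonempty_linearEquiv_of_injective_of_exact [IsSimpleModule A N] [IsSimpleModule A N']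
    {i : L →ₗ[A] M} {p : M →ₗ[A] N} {i' : L →ₗ[A] M'} {p' : M' →ₗ[A] N'}
    (hp : Function.Surjective p) (hip : Function.Exact i p) (hip' : Function.Exact i' p')
    {k : M →ₗ[A] M'} (hk : Function.Injective k) (hki : k ∘ₗ i = i') :
    Nonempty (N ≃ₗ[A] N') := by
  subst hki
  have := IsSimpleModule.nontrivial A N
  refine nonempty_linearEquiv_of_ker_le hp (g := p' ∘ₗ k) (fun m hm => ?_) fun h0 => ?_
  · obtain ⟨l, rfl⟩ := (hip m).mp hm
    exact hip'.apply_apply_eq_zero l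
  · obtain ⟨n, hn⟩ := exists_ne (0 : N)
    obtain ⟨m, rfl⟩ := hp n
    obtain ⟨l, hl⟩ := (hip' (k m)).mp (LinearMap.congr_fun h0 m)
    exact hn ((hip m).mpr ⟨l, hk hl⟩)

theorem nonempty_linearEquiv_of_surjective_of_exact [IsSimpleModule A L] [IsSimpleModule A L']
    {i : L →ₗ[A] M} {p : M →ₗ[A] N} {i' : L' →ₗ[A] M'} {p' : M' →ₗ[A] N}
    (hi' : Function.Injective i') (hip : Function.Exact i p) (hip' : Function.Exact i' p')
    {k : M →ₗ[A] M'} (hk : Function.Surjective k) (hkp : p' ∘ₗ k = p) :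
    Nonempty (L ≃ₗ[A] L') := by
  subst hkp
  have := IsSimpleModule.nontrivial A L'
  refine nonempty_linearEquiv_of_range_le hi' (g := k ∘ₗ i) ?_ fun h0 => ?_
  · rintro _ ⟨l, rfl⟩
    exact (hip' _).mp (hip.apply_apply_eq_zero l)
  · obtain ⟨l', hl'⟩ := exists_ne (0 : L')
    obtain ⟨m, hm⟩ := hk (i' l')
    have hpm : (p' ∘ₗ k) m = 0 := by
      rw [LinearMap.comp_apply, hm, hip'.apply_apply_eq_zero]
    obtain ⟨l, rfl⟩ := (hip m).mp hpm
    have hl0 : i' l' = 0 := hm.symm.trans (LinearMap.congr_fun h0 l)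
    exact hl' (hi' (hl0.trans (map_zero i').symm))

end Factorization

section Uniserial

variable {A : Type*} [Ring A] {L M N S T U X Z : Type*} [AddCommGroup L] [Module A L]
  [AddCommGroup M] [Module A M] [AddCommGroup N] [Module A N] [AddCommGroup S] [Module A S]
  [AddCommGroup T] [Module A T] [AddCommGroup U] [Module A U] [AddCommGroup X] [Module A X]
  [AddCommGroup Z] [Module A Z]

variable (A M) in
/-- `IsUniserial` for unbundled modules: the submodules of `M` form a chain. -/
def Uniserial : Prop := ∀ N₁ N₂ : Submodule A M, N₁ ≤ N₂ ∨ N₂ ≤ N₁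

theorem Uniserial.of_surjective (hM : Uniserial A M) {f : M →ₗ[A] N}
    (hf : Function.Surjective f) : Uniserial A N := fun N₁ N₂ => by
  simpa only [Submodule.comap_le_comap_iff_of_surjective hf] using hM (N₁.comap f) (N₂.comap f)

theorem Uniserial.of_injective (hN : Uniserial A N) {f : M →ₗ[A] N}
    (hf : Function.Injective f) : Uniserial A M := fun N₁ N₂ => by
  simpa only [Submodule.map_le_map_iff_of_injective hf] using hN (N₁.map f) (N₂.map f)

theorem Uniserial.surjective_of_comp [Nontrivial U] (hL : Uniserial A L) {f : M →ₗ[A] L}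
    {g : L →ₗ[A] U} (h : Function.Surjective (g ∘ₗ f)) : Function.Surjective f := by
  rcases hL (LinearMap.range f) (LinearMap.ker g) with hle | hle
  · obtain ⟨u, hu⟩ := exists_ne (0 : U)
    obtain ⟨m, rfl⟩ := h u
    exact absurd (hle ⟨m, rfl⟩) hu
  · intro x
    obtain ⟨m, hm⟩ := h (g x)
    obtain ⟨m', hm'⟩ : x - f m ∈ LinearMap.range f :=
      hle (by rw [LinearMap.mem_ker, map_sub, ← hm, LinearMap.comp_apply, sub_self])
    exact ⟨m' + m, by rw [map_add, hm', sub_add_cancel]⟩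

theorem Uniserial.injective_of_comp [Nontrivial S] (hL : Uniserial A L) {f : S →ₗ[A] L}
    {g : L →ₗ[A] M} (h : Function.Injective (g ∘ₗ f)) : Function.Injective g := by
  rcases hL (LinearMap.range f) (LinearMap.ker g) with hle | hle
  · obtain ⟨s, hs⟩ := exists_ne (0 : S)
    exact absurd (h ((hle ⟨s, rfl⟩ : g (f s) = 0).trans (map_zero (g ∘ₗ f)).symm)) hs
  · refine (injective_iff_map_eq_zero g).mpr fun x hx => ?_
    obtain ⟨s, rfl⟩ := hle hx
    rw [(injective_iff_map_eq_zero (g ∘ₗ f)).mp h s hx, map_zero]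

theorem Uniserial.nonempty_linearEquiv_of_surjective [IsSimpleModule A T] [IsSimpleModule A U]
    (hM : Uniserial A M) {f : M →ₗ[A] T} (hf : Function.Surjective f) {g : M →ₗ[A] U}
    (hg : Function.Surjective g) : Nonempty (T ≃ₗ[A] U) := by
  have := IsSimpleModule.nontrivial A T
  have := IsSimpleModule.nontrivial A U
  rcases hM (LinearMap.ker f) (LinearMap.ker g) with h | h
  · exact nonempty_linearEquiv_of_ker_le hf h (LinearMap.ne_zero_of_surjective hg)
  · exact (nonempty_linearEquiv_of_ker_le hg h (LinearMap.ne_zero_of_surjective hf)).map .symm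

theorem Uniserial.nonempty_linearEquiv_of_injective [IsSimpleModule A T] [IsSimpleModule A U]
    (hM : Uniserial A M) {f : T →ₗ[A] M} (hf : Function.Injective f) {g : U →ₗ[A] M}
    (hg : Function.Injective g) : Nonempty (T ≃ₗ[A] U) := by
  have := IsSimpleModule.nontrivial A T
  have := IsSimpleModule.nontrivial A U
  rcases hM (LinearMap.range f) (LinearMap.range g) with h | h
  · exact nonempty_linearEquiv_of_range_le hg h (LinearMap.ne_zero_of_injective hf)
  · exact (nonempty_linearEquiv_of_range_le hf h (LinearMap.ne_zero_of_injective hg)).map .symm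

theorem Uniserial.exists_exact_of_surjective (hN : Uniserial A N) {i : X →ₗ[A] N}
    (hi : Function.Injective i) {p : N →ₗ[A] Z} (hp : Function.Surjective p)
    (hip : Function.Exact i p) {a : X →ₗ[A] U} (ha : Function.Surjective a) :
    ∃ (N' : Submodule A N) (i' : U →ₗ[A] N ⧸ N') (p' : N ⧸ N' →ₗ[A] Z), Uniserial A (N ⧸ N') ∧
      Function.Injective i' ∧ Function.Surjective p' ∧ Function.Exact i' p' := by
  let N' := (LinearMap.ker a).map i
  have hker : LinearMap.ker (N'.mkQ ∘ₗ i) = LinearMap.ker a := by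
    rw [LinearMap.ker_comp, Submodule.ker_mkQ, Submodule.comap_map_eq_of_injective hi]
  have hN'p : N' ≤ LinearMap.ker p := by
    rintro _ ⟨x, -, rfl⟩
    exact hip.apply_apply_eq_zero x
  obtain ⟨i', hi'⟩ := exists_comp_eq_of_ker_le ha hker.ge
  have hi' (x : X) : i' (a x) = N'.mkQ (i x) := LinearMap.congr_fun hi' x
  refine ⟨N', i', N'.liftQ p hN'p, hN.of_surjective N'.mkQ_surjective, ?_, fun z => ?_, ?_⟩
  · refine (injective_iff_map_eq_zero i').mpr (ha.forall.mpr fun x hx => ?_)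
    exact hker.le ((hi' x).symm.trans hx)
  · obtain ⟨n, rfl⟩ := hp z
    exact ⟨N'.mkQ n, rfl⟩
  · refine N'.mkQ_surjective.forall.mpr fun n => ⟨fun hn => ?_, ?_⟩
    · obtain ⟨x, rfl⟩ := (hip n).mp hn
      exact ⟨a x, hi' x⟩
    · rintro ⟨u, hu⟩
      obtain ⟨x, rfl⟩ := ha u
      rw [← hu, hi']
      exact hip.apply_apply_eq_zero x

theorem Uniserial.exists_exact_of_injective (hN : Uniserial A N) {i : X →ₗ[A] N}
    (hi : Function.Injective i) {p : N →ₗ[A] Z} (hp : Function.Surjective p)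
    (hip : Function.Exact i p) {b : T →ₗ[A] Z} (hb : Function.Injective b) :
    ∃ (N' : Submodule A N) (i' : X →ₗ[A] N') (p' : N' →ₗ[A] T), Uniserial A N' ∧
      Function.Injective i' ∧ Function.Surjective p' ∧ Function.Exact i' p' := by
  let N' := (LinearMap.range b).comap p
  have hiN' (x : X) : i x ∈ N' := ⟨0, by rw [map_zero, hip.apply_apply_eq_zero]⟩
  obtain ⟨p', hp'⟩ : ∃ p' : N' →ₗ[A] T, b ∘ₗ p' = p ∘ₗ N'.subtype :=
    exists_comp_eq_of_range_le hb (by rintro _ ⟨n, rfl⟩; exact n.2)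
  have hp' (n : N') : b (p' n) = p n := LinearMap.congr_fun hp' n
  refine ⟨N', i.codRestrict N' hiN', p', hN.of_injective N'.injective_subtype,
    fun x y h => hi (congrArg Subtype.val h), fun t => ?_, fun n => ⟨fun hn => ?_, ?_⟩⟩
  · obtain ⟨n, hn⟩ := hp (b t)
    exact ⟨⟨n, t, hn.symm⟩, hb ((hp' _).trans hn)⟩
  · obtain ⟨x, hx⟩ := (hip n).mp (by rw [← hp', hn, map_zero])
    exact ⟨x, Subtype.ext hx⟩
  · rintro ⟨x, rfl⟩
    refine hb ?_
    rw [hp', map_zero]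
    exact hip.apply_apply_eq_zero x

theorem Uniserial.exists_surjective_ker [Nontrivial T] (hN : Uniserial A N) {i : X →ₗ[A] N}
    (hi : Function.Injective i) {p : N →ₗ[A] T} (hp : Function.Surjective p)
    (hip : Function.Exact i p) [Module.Projective A M] {c : M →ₗ[A] T}
    (hc : Function.Surjective c) : ∃ k : LinearMap.ker c →ₗ[A] X, Function.Surjective k := by
  obtain ⟨e, he⟩ := Module.projective_lifting_property p c hp
  have hpe (m : M) : p (e m) = c m := LinearMap.congr_fun he m
  have he : Function.Surjective e := hN.surjective_of_comp (he ▸ hc)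
  obtain ⟨k, hk⟩ : ∃ k, i ∘ₗ k = e ∘ₗ (LinearMap.ker c).subtype := by
    refine exists_comp_eq_of_range_le hi ?_
    rintro _ ⟨m, rfl⟩
    exact (hip _).mp ((hpe m).trans m.2)
  refine ⟨k, fun x => ?_⟩
  obtain ⟨m, hm⟩ := he (i x)
  have hcm : c m = 0 := by rw [← hpe, hm, hip.apply_apply_eq_zero]
  exact ⟨⟨m, hcm⟩, hi ((LinearMap.congr_fun hk ⟨m, hcm⟩).trans hm)⟩

end Uniserial

section UniserialInjective

universe u v

variable {A : Type u} [Ring A] {C I N T : Type v} [AddCommGroup C] [Module A C] [AddCommGroup I]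
  [Module A I] [AddCommGroup N] [Module A N] [AddCommGroup T] [Module A T]

theorem Uniserial.exists_extend_injective [Nontrivial T] [Module.Injective A I]
    (hN : Uniserial A N) {i : T →ₗ[A] N} (hi : Function.Injective i) {c : T →ₗ[A] I}
    (hc : Function.Injective c) : ∃ e : N →ₗ[A] I, e ∘ₗ i = c ∧ Function.Injective e := by
  obtain ⟨e, he⟩ := Module.Injective.out i hi c
  have he : e ∘ₗ i = c := LinearMap.ext he
  exact ⟨e, he, hN.injective_of_comp (he ▸ hc)⟩

theorem Uniserial.exists_injective_quotient_range [Nontrivial T] (hN : Uniserial A N)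
    {i : T →ₗ[A] N} (hi : Function.Injective i) {p : N →ₗ[A] C} (hp : Function.Surjective p)
    (hip : Function.Exact i p) [Module.Injective A I] {c : T →ₗ[A] I}
    (hc : Function.Injective c) :
    ∃ k : C →ₗ[A] I ⧸ LinearMap.range c, Function.Injective k := by
  obtain ⟨e, rfl, he⟩ := hN.exists_extend_injective hi hc
  obtain ⟨k, hk⟩ : ∃ k, k ∘ₗ p = (LinearMap.range (e ∘ₗ i)).mkQ ∘ₗ e := by
    refine exists_comp_eq_of_ker_le hp fun n hn => ?_
    obtain ⟨t, rfl⟩ := (hip n).mp hn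
    exact (Submodule.Quotient.mk_eq_zero _).mpr ⟨t, rfl⟩
  refine ⟨k, (injective_iff_map_eq_zero k).mpr (hp.forall.mpr fun n hn => ?_)⟩
  obtain ⟨t, ht⟩ := (Submodule.Quotient.mk_eq_zero _).mp ((LinearMap.congr_fun hk n).symm.trans hn)
  rw [← he ht, hip.apply_apply_eq_zero]

end UniserialInjective

section UniserialExtension

variable {A I N P U U' T T' X Z : Type} [Ring A] [AddCommGroup I] [Module A I]
  [AddCommGroup N] [Module A N] [AddCommGroup P] [Module A P] [AddCommGroup U] [Module A U]
  [AddCommGroup U'] [Module A U'] [AddCommGroup T] [Module A T] [AddCommGroup T'] [Module A T']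
  [AddCommGroup X] [Module A X] [AddCommGroup Z] [Module A Z]

variable (A U T) in
/-- Some extension of `T` by `U` is uniserial. For simple modules over a Nakayama algebra this says
that `U` is the Auslander-Reiten translate of `T`. -/
def HasUniserialExtension : Prop :=
  ∃ (E : ModuleCat.{0} A) (i : U →ₗ[A] E) (p : E →ₗ[A] T), Uniserial A E ∧
    Function.Injective i ∧ Function.Surjective p ∧ Function.Exact i p

theorem Uniserial.hasUniserialExtension (hN : Uniserial A N) {i : X →ₗ[A] N}
    (hi : Function.Injective i) {p : N →ₗ[A] Z} (hp : Function.Surjective p)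
    (hip : Function.Exact i p) {a : X →ₗ[A] U} (ha : Function.Surjective a) {b : T →ₗ[A] Z}
    (hb : Function.Injective b) : HasUniserialExtension A U T := by
  obtain ⟨N', i', p', hN', hi', hp', hip'⟩ := hN.exists_exact_of_surjective hi hp hip ha
  obtain ⟨E, i'', p'', hE, hi'', hp'', hip''⟩ := hN'.exists_exact_of_injective hi' hp' hip' hb
  exact ⟨ModuleCat.of A E, i'', p'', hE, hi'', hp'', hip''⟩

theorem HasUniserialExtension.nonempty_linearEquiv_right [Nontrivial U] [IsSimpleModule A T]
    [IsSimpleModule A T'] (h : HasUniserialExtension A U T) (h' : HasUniserialExtension A U T')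
    (hI : Uniserial A I) [Module.Injective A I] {f : U →ₗ[A] I} (hf : Function.Injective f) :
    Nonempty (T ≃ₗ[A] T') := by
  obtain ⟨E, i, p, hE, hi, hp, hip⟩ := h
  obtain ⟨E', i', p', hE', hi', hp', hip'⟩ := h'
  obtain ⟨e, hei, he⟩ := hE.exists_extend_injective hi hf
  obtain ⟨e', hei', he'⟩ := hE'.exists_extend_injective hi' hf
  rcases hI (LinearMap.range e) (LinearMap.range e') with hle | hle
  · obtain ⟨k, rfl⟩ := exists_comp_eq_of_range_le he' hle
    refine nonempty_linearEquiv_of_injective_of_exact hp hip hip' (k := k)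
      (.of_comp (f := e') he) ?_
    exact (LinearMap.cancel_left he').mp (hei.trans hei'.symm)
  · obtain ⟨k, rfl⟩ := exists_comp_eq_of_range_le he hle
    refine (nonempty_linearEquiv_of_injective_of_exact hp' hip' hip (k := k)
      (.of_comp (f := e) he') ?_).map .symm
    exact (LinearMap.cancel_left he).mp (hei'.trans hei.symm)

theorem HasUniserialExtension.nonempty_linearEquiv_left [Nontrivial T] [IsSimpleModule A U]
    [IsSimpleModule A U'] (h : HasUniserialExtension A U T) (h' : HasUniserialExtension A U' T)
    (hP : Uniserial A P) [Module.Projective A P] {f : P →ₗ[A] T} (hf : Function.Surjective f) :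
    Nonempty (U ≃ₗ[A] U') := by
  obtain ⟨E, i, p, hE, hi, hp, hip⟩ := h
  obtain ⟨E', i', p', hE', hi', hp', hip'⟩ := h'
  obtain ⟨e, hpe⟩ := Module.projective_lifting_property p f hp
  obtain ⟨e', hpe'⟩ := Module.projective_lifting_property p' f hp'
  have he : Function.Surjective e := hE.surjective_of_comp (hpe ▸ hf)
  have he' : Function.Surjective e' := hE'.surjective_of_comp (hpe' ▸ hf)
  rcases hP (LinearMap.ker e) (LinearMap.ker e') with hle | hle
  · obtain ⟨k, rfl⟩ := exists_comp_eq_of_ker_le he hle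
    refine nonempty_linearEquiv_of_surjective_of_exact hi' hip hip' (k := k)
      (.of_comp (g := e) he') ?_
    exact (LinearMap.cancel_right he).mp (hpe'.trans hpe.symm)
  · obtain ⟨k, rfl⟩ := exists_comp_eq_of_ker_le he' hle
    refine (nonempty_linearEquiv_of_surjective_of_exact hi hip' hip (k := k)
      (.of_comp (g := e') he) ?_).map .symm
    exact (LinearMap.cancel_right he').mp (hpe.trans hpe'.symm)

end UniserialExtension

section NakayamaCovers

variable {A : Type} [Ring A] {S P I : Type} [AddCommGroup S] [Module A S] [IsSimpleModule A S]

theorem IsNakayama.uniserial_of_isProjectiveCover (hA : IsNakayama A) [AddCommGroup P]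
    [Module A P] [Module.Finite A P] {f : P →ₗ[A] S} (hf : IsProjectiveCover f) :
    Uniserial A P := by
  have := IsSimpleModule.nontrivial A S
  refine hA (ModuleCat.of A P) ‹Module.Finite A P› ⟨hf.surjective.nontrivial, fun N₁ N₂ hN => ?_⟩
  change Submodule A P at N₁ N₂
  rcases eq_bot_or_eq_top (N₁.map f) with h₁ | h₁
  · refine .inl (eq_bot_of_isCompl_top (hf.eq_top N₂ ?_ ▸ hN))
    have hmap : N₁.map f ⊔ N₂.map f = ⊤ := by
      rw [← Submodule.map_sup, hN.sup_eq_top, Submodule.map_top,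
        LinearMap.range_eq_top.mpr hf.surjective]
    rwa [h₁, bot_sup_eq] at hmap
  · exact .inr (eq_bot_of_top_isCompl (hf.eq_top N₁ h₁ ▸ hN))

theorem IsNakayama.uniserial_of_isInjectiveEnvelope (hA : IsNakayama A) [AddCommGroup I]
    [Module A I] [Module.Finite A I] {f : S →ₗ[A] I} (hf : IsInjectiveEnvelope f) :
    Uniserial A I := by
  have := IsSimpleModule.nontrivial A S
  refine hA (ModuleCat.of A I) ‹Module.Finite A I› ⟨hf.injective.nontrivial, fun N₁ N₂ hN => ?_⟩
  change Submodule A I at N₁ N₂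
  rcases eq_bot_or_eq_top (N₁.comap f) with h₁ | h₁
  · exact .inl (hf.eq_bot N₁ h₁)
  · refine .inr (hf.eq_bot N₂ ?_)
    have hcomap : N₁.comap f ⊓ N₂.comap f = ⊥ := by
      rw [← Submodule.comap_inf, hN.inf_eq_bot, Submodule.comap_bot,
        LinearMap.ker_eq_bot.mpr hf.injective]
    rwa [h₁, top_inf_eq] at hcomap

end NakayamaCovers

section FiniteDimension

variable {A X Y Z : Type} [Ring A] [AddCommGroup X] [Module A X] [AddCommGroup Y] [Module A Y]
  [AddCommGroup Z] [Module A Z] {i : X →ₗ[A] Y} {p : Y →ₗ[A] Z}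

theorem hasFiniteProjDim_of_projective [Module.Projective A X] : HasFiniteProjDim A X :=
  ⟨1, hasProjectiveDimensionLT_one_iff.mpr inferInstance⟩

theorem hasFiniteInjDim_of_injective [Module.Injective A X] : HasFiniteInjDim A X :=
  ⟨1, hasInjectiveDimensionLT_one_iff.mpr inferInstance⟩

theorem hasFiniteInjDim_of_subsingleton [Subsingleton X] : HasFiniteInjDim A X :=
  have : Module.Injective A X := ⟨fun _ _ _ _ _ _ _ _ _ => ⟨0, fun _ => Subsingleton.elim _ _⟩⟩
  hasFiniteInjDim_of_injective

theorem nontrivial_of_not_hasFiniteProjDim (hX : ¬ HasFiniteProjDim A X) : Nontrivial X :=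
  not_subsingleton_iff_nontrivial.mp fun _ => hX hasFiniteProjDim_of_projective

theorem nontrivial_of_not_hasFiniteInjDim (hX : ¬ HasFiniteInjDim A X) : Nontrivial X :=
  not_subsingleton_iff_nontrivial.mp fun _ => hX hasFiniteInjDim_of_subsingleton

theorem HasFiniteProjDim.of_retract (h : HasFiniteProjDim A Y) {r : Y →ₗ[A] X}
    (hr : r ∘ₗ i = LinearMap.id) : HasFiniteProjDim A X := by
  obtain ⟨n, hn⟩ := h
  have ρ : Retract (ModuleCat.of A X) (ModuleCat.of A Y) :=
    ⟨ModuleCat.ofHom i, ModuleCat.ofHom r, ModuleCat.hom_ext hr⟩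
  exact ⟨n, ρ.hasProjectiveDimensionLT n⟩

theorem HasFiniteInjDim.of_retract (h : HasFiniteInjDim A Y) {r : Y →ₗ[A] X}
    (hr : r ∘ₗ i = LinearMap.id) : HasFiniteInjDim A X := by
  obtain ⟨n, hn⟩ := h
  have ρ : Retract (ModuleCat.of A X) (ModuleCat.of A Y) :=
    ⟨ModuleCat.ofHom i, ModuleCat.ofHom r, ModuleCat.hom_ext hr⟩
  exact ⟨n, ρ.hasInjectiveDimensionLT n⟩

theorem HasFiniteProjDim.of_linearEquiv (h : HasFiniteProjDim A Y) (e : X ≃ₗ[A] Y) :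
    HasFiniteProjDim A X := h.of_retract e.symm_comp

theorem HasFiniteInjDim.of_linearEquiv (h : HasFiniteInjDim A Y) (e : X ≃ₗ[A] Y) :
    HasFiniteInjDim A X := h.of_retract e.symm_comp

theorem hasFiniteProjDim_middle (hi : Function.Injective i) (hp : Function.Surjective p)
    (hip : Function.Exact i p) (hX : HasFiniteProjDim A X) (hZ : HasFiniteProjDim A Z) :
    HasFiniteProjDim A Y := by
  obtain ⟨m, hm⟩ := hX
  obtain ⟨n, hn⟩ := hZ
  exact ⟨max m n, (shortExact_of_exact hi hp hip).hasProjectiveDimensionLT_X₂ _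
    (hasProjectiveDimensionLT_of_ge _ m _ (le_max_left m n))
    (hasProjectiveDimensionLT_of_ge _ n _ (le_max_right m n))⟩

theorem hasFiniteProjDim_right (hi : Function.Injective i) (hp : Function.Surjective p)
    (hip : Function.Exact i p) (hX : HasFiniteProjDim A X) (hY : HasFiniteProjDim A Y) :
    HasFiniteProjDim A Z := by
  obtain ⟨m, hm⟩ := hX
  obtain ⟨n, hn⟩ := hY
  exact ⟨max m n + 1, (shortExact_of_exact hi hp hip).hasProjectiveDimensionLT_X₃ _
    (hasProjectiveDimensionLT_of_ge _ m _ (le_max_left m n))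
    (hasProjectiveDimensionLT_of_ge _ n _ ((le_max_right m n).trans (Nat.le_succ _)))⟩

theorem hasFiniteInjDim_middle (hi : Function.Injective i) (hp : Function.Surjective p)
    (hip : Function.Exact i p) (hX : HasFiniteInjDim A X) (hZ : HasFiniteInjDim A Z) :
    HasFiniteInjDim A Y := by
  obtain ⟨m, hm⟩ := hX
  obtain ⟨n, hn⟩ := hZ
  exact ⟨max m n, (shortExact_of_exact hi hp hip).hasInjectiveDimensionLT_X₂ _
    (hasInjectiveDimensionLT_of_ge _ m _ (le_max_left m n))
    (hasInjectiveDimensionLT_of_ge _ n _ (le_max_right m n))⟩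

theorem hasFiniteInjDim_left (hi : Function.Injective i) (hp : Function.Surjective p)
    (hip : Function.Exact i p) (hY : HasFiniteInjDim A Y) (hZ : HasFiniteInjDim A Z) :
    HasFiniteInjDim A X := by
  obtain ⟨m, hm⟩ := hY
  obtain ⟨n, hn⟩ := hZ
  exact ⟨max m n + 1, (shortExact_of_exact hi hp hip).hasInjectiveDimensionLT_X₁ _
    (hasInjectiveDimensionLT_of_ge _ n _ (le_max_right m n))
    (hasInjectiveDimensionLT_of_ge _ m _ ((le_max_left m n).trans (Nat.le_succ _)))⟩

end FiniteDimension

section SubmoduleExactness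

variable {A Q : Type*} [Ring A] [AddCommGroup Q] [Module A Q] {B C : Submodule A Q}

theorem exact_inclusion_submoduleComap_mkQ {S : Submodule A (Q ⧸ B)} (h : B ≤ S.comap B.mkQ) :
    Function.Exact (Submodule.inclusion h) (B.mkQ.submoduleComap S) := fun x => by
  rw [← Submodule.coe_eq_zero]
  refine (Submodule.Quotient.mk_eq_zero B).trans ⟨fun hx => ⟨⟨x, hx⟩, rfl⟩, ?_⟩
  rintro ⟨b, rfl⟩
  exact b.2

theorem mapQ_map_subtype_injective (D : Submodule A C) :
    Function.Injective (D.mapQ (D.map C.subtype) C.subtype (Submodule.le_comap_map _ _)) := by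
  rw [← LinearMap.ker_eq_bot, Submodule.ker_mapQ,
    Submodule.comap_map_eq_of_injective C.injective_subtype, Submodule.mkQ_map_self]

theorem exact_mapQ_factor (D : Submodule A C) :
    Function.Exact (D.mapQ (D.map C.subtype) C.subtype (Submodule.le_comap_map _ _))
      (Submodule.factor (Submodule.map_subtype_le C D)) := by
  rw [LinearMap.exact_iff, Submodule.factor, Submodule.ker_mapQ, Submodule.range_mapQ,
    Submodule.comap_id, Submodule.range_subtype]

end SubmoduleExactness

section InfiniteDimension

variable {A Q : Type} [Ring A] [AddCommGroup Q] [Module A Q] [IsNoetherian A Q] [IsArtinian A Q]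

-- `B` is a largest submodule of `K` with finite projective dimension.
theorem exists_simple_not_hasFiniteProjDim (hQ : HasFiniteProjDim A Q) {K : Submodule A Q}
    (hK : ¬ HasFiniteProjDim A K) :
    ∃ B ≤ K, HasFiniteProjDim A (Q ⧸ B) ∧
      ∃ S ≤ K.map B.mkQ, IsSimpleModule A S ∧ ¬ HasFiniteProjDim A S := by
  obtain ⟨B, hB⟩ := exists_maximal_of_wellFoundedGT (fun B => B ≤ K ∧ HasFiniteProjDim A B)
    ⟨⊥, bot_le, hasFiniteProjDim_of_projective⟩
  obtain ⟨hBK, hBfin⟩ := hB.prop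
  refine ⟨B, hBK, hasFiniteProjDim_right B.injective_subtype B.mkQ_surjective
    (LinearMap.exact_subtype_mkQ B) hBfin hQ, ?_⟩
  have hmap : K.map B.mkQ ≠ ⊥ := fun h => hK <| by
    rw [eq_bot_iff, Submodule.map_le_iff_le_comap, Submodule.comap_bot, Submodule.ker_mkQ] at h
    rwa [← hBK.antisymm h]
  have := isAtomic_of_orderBot_wellFounded_lt (α := Submodule A (Q ⧸ B)) wellFounded_lt
  obtain ⟨S, hS, hSK⟩ := (IsAtomic.eq_bot_or_exists_atom_le (K.map B.mkQ)).resolve_left hmap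
  refine ⟨S, hSK, isSimpleModule_iff_isAtom.mpr hS, fun hSfin => hS.1 ?_⟩
  have hBS : B ≤ S.comap B.mkQ := B.ker_mkQ.ge.trans (LinearMap.ker_le_comap _)
  have hSK' : S.comap B.mkQ ≤ K := by
    rw [← sup_eq_right.mpr hBK, ← B.comap_map_mkQ]
    exact Submodule.comap_mono hSK
  have hfin : HasFiniteProjDim A (S.comap B.mkQ) :=
    hasFiniteProjDim_middle (Submodule.inclusion_injective hBS)
      (LinearMap.submoduleComap_surjective_of_surjective _ S B.mkQ_surjective)
      (exact_inclusion_submoduleComap_mkQ hBS) hBfin hSfin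
  rw [eq_bot_iff, ← Submodule.map_comap_eq_of_surjective B.mkQ_surjective S,
    Submodule.map_le_iff_le_comap, Submodule.comap_bot, Submodule.ker_mkQ]
  exact hB.le_of_ge ⟨hSK', hfin⟩ hBS

-- `C` is a smallest submodule containing `H` whose quotient has finite injective dimension.
theorem exists_simple_not_hasFiniteInjDim (hQ : HasFiniteInjDim A Q) {H : Submodule A Q}
    (hH : ¬ HasFiniteInjDim A (Q ⧸ H)) :
    ∃ C ≥ H, HasFiniteInjDim A C ∧ ∃ D ≥ H.comap C.subtype, IsSimpleModule A (C ⧸ D) ∧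
      ¬ HasFiniteInjDim A (C ⧸ D) := by
  obtain ⟨C, hC⟩ := exists_minimal_of_wellFoundedLT
    (fun C => H ≤ C ∧ HasFiniteInjDim A (Q ⧸ C)) ⟨⊤, le_top, hasFiniteInjDim_of_subsingleton⟩
  obtain ⟨hHC, hCfin⟩ := hC.prop
  refine ⟨C, hHC, hasFiniteInjDim_left C.injective_subtype C.mkQ_surjective
    (LinearMap.exact_subtype_mkQ C) hQ hCfin, ?_⟩
  have hcomap : H.comap C.subtype ≠ ⊤ := fun h => hH <| by
    rwa [hHC.antisymm (Submodule.comap_subtype_eq_top.mp h)]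
  obtain ⟨D, hD, hHD⟩ := (eq_top_or_exists_le_coatom (H.comap C.subtype)).resolve_left hcomap
  refine ⟨D, hHD, isSimpleModule_iff_isCoatom.mpr hD, fun hDfin => hD.1 ?_⟩
  have hDC : D.map C.subtype ≤ C := Submodule.map_subtype_le C D
  have hHD' : H ≤ D.map C.subtype := fun x hx => ⟨⟨x, hHC hx⟩, hHD hx, rfl⟩
  have hfin : HasFiniteInjDim A (Q ⧸ D.map C.subtype) :=
    hasFiniteInjDim_middle (mapQ_map_subtype_injective D) (Submodule.factor_surjective hDC)
      (exact_mapQ_factor D) hDfin hCfin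
  have hle : C ≤ D.map C.subtype := hC.le_of_le ⟨hHD', hfin⟩ hDC
  rw [eq_top_iff, ← Submodule.comap_map_eq_of_injective C.injective_subtype D]
  exact fun x _ => hle x.2

end InfiniteDimension

section SimpleSubquotient

variable {A : Type} [Ring A] {I J L P T : Type} [AddCommGroup I] [Module A I]
  [AddCommGroup J] [Module A J] [AddCommGroup L] [Module A L] [AddCommGroup P] [Module A P]
  [AddCommGroup T] [Module A T]

theorem IsNakayama.exists_surjective_of_not_hasFiniteProjDim [IsArtinianRing A]
    (hA : IsNakayama A) [Module.Finite A L] (hL : Uniserial A L) (hpd : ¬ HasFiniteProjDim A L) :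
    ∃ (J : ModuleCat.{0} A) (δ : J →ₗ[A] L), Uniserial A J ∧ HasFiniteProjDim A J ∧
      Function.Surjective δ ∧
        ∃ S ≤ LinearMap.ker δ, IsSimpleModule A S ∧ ¬ HasFiniteProjDim A S := by
  have := nontrivial_of_not_hasFiniteProjDim hpd
  obtain ⟨D, hD⟩ := IsCoatomic.exists_coatom (Submodule A L)
  have := isSimpleModule_iff_isCoatom.mpr hD
  have := IsSimpleModule.nontrivial A (L ⧸ D)
  obtain ⟨P, c, _, hc⟩ := exists_isProjectiveCover (A := A) (L ⧸ D)
  have := hc.projective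
  obtain ⟨h, hh⟩ := Module.projective_lifting_property D.mkQ c D.mkQ_surjective
  have hh : Function.Surjective h := hL.surjective_of_comp (hh ▸ hc.surjective)
  have hker : ¬ HasFiniteProjDim A (LinearMap.ker h) := fun hfin =>
    hpd (hasFiniteProjDim_right (Submodule.injective_subtype _) hh h.exact_subtype_ker_map hfin
      hasFiniteProjDim_of_projective)
  obtain ⟨B, hB, hBfin, S, hS, hSsimple, hSpd⟩ :=
    exists_simple_not_hasFiniteProjDim hasFiniteProjDim_of_projective hker
  refine ⟨ModuleCat.of A (P ⧸ B), B.liftQ h hB,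
    (hA.uniserial_of_isProjectiveCover hc).of_surjective B.mkQ_surjective, hBfin,
    fun x => (hh x).imp' B.mkQ fun _ hy => hy, S, ?_, hSsimple, hSpd⟩
  rwa [Submodule.ker_liftQ]

theorem IsNakayama.exists_injective_of_not_hasFiniteInjDim (R : Type) [CommRing R]
    [IsArtinianRing R] [Algebra R A] [Module.Finite R A] (hA : IsNakayama A) [Module.Finite A L]
    (hL : Uniserial A L) (hid : ¬ HasFiniteInjDim A L) :
    ∃ (J : ModuleCat.{0} A) (δ : L →ₗ[A] J), Uniserial A J ∧ HasFiniteInjDim A J ∧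
      Function.Injective δ ∧
        ∃ D ≥ LinearMap.range δ, IsSimpleModule A (J ⧸ D) ∧ ¬ HasFiniteInjDim A (J ⧸ D) := by
  have : IsArtinianRing A := IsArtinianRing.of_finite R A
  have := nontrivial_of_not_hasFiniteInjDim hid
  have := isAtomic_of_orderBot_wellFounded_lt (α := Submodule A L) wellFounded_lt
  obtain ⟨U, hU⟩ := IsAtomic.exists_atom (Submodule A L)
  have := isSimpleModule_iff_isAtom.mpr hU
  have := IsSimpleModule.nontrivial A U
  obtain ⟨I, c, _, hc⟩ := exists_isInjectiveEnvelope (A := A) U R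
  have := hc.module_injective
  obtain ⟨h, -, hh⟩ := hL.exists_extend_injective U.injective_subtype hc.injective
  have hrange : ¬ HasFiniteInjDim A (I ⧸ LinearMap.range h) := fun hfin =>
    hid (hasFiniteInjDim_left hh (Submodule.mkQ_surjective _) (LinearMap.exact_map_mkQ_range h)
      hasFiniteInjDim_of_injective hfin)
  obtain ⟨C, hC, hCfin, D, hD, hDsimple, hDid⟩ :=
    exists_simple_not_hasFiniteInjDim hasFiniteInjDim_of_injective hrange
  have hhC (x : L) : h x ∈ C := hC (h.mem_range_self x)
  refine ⟨ModuleCat.of A C, h.codRestrict C hhC,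
    (hA.uniserial_of_isInjectiveEnvelope hc).of_injective C.injective_subtype, hCfin,
    fun x y hxy => hh (congrArg Subtype.val hxy), D, ?_, hDsimple, hDid⟩
  rwa [LinearMap.range_codRestrict]


-- Otherwise the cokernel of `g` contains a simple module `T'`. Uniserial extensions of both `T`
-- and `T'` by `U` exist, so `T ≃ T'`, and `P` maps onto the submodule of `I` in which `J` has
-- cokernel `T`. Hence `ker c` surjects onto `J`, although `J` is longer than `ker c`.
theorem IsNakayama.surjective_of_not_injective (R : Type) [CommRing R] [IsArtinianRing R]
    [Algebra R A] [Module.Finite R A] (hA : IsNakayama A) [Module.Finite A P] [Module.Finite A I]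
    [IsSimpleModule A T] {c : P →ₗ[A] T} (hc : IsProjectiveCover c) (hI : Uniserial A I)
    {g : J →ₗ[A] I} (hg : Function.Injective g) {δ : J →ₗ[A] LinearMap.ker c}
    (hδ : Function.Surjective δ) (hδ' : ¬ Function.Injective δ) {U : Type} [AddCommGroup U]
    [Module A U] [IsSimpleModule A U] {a : LinearMap.ker c →ₗ[A] U}
    (ha : Function.Surjective a) : Function.Surjective g := by
  have : IsArtinianRing A := IsArtinianRing.of_finite R A
  have := IsSimpleModule.nontrivial A T
  have := IsSimpleModule.nontrivial A U
  have := hc.projective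
  rw [← LinearMap.range_eq_top]
  by_contra hne
  have := Submodule.Quotient.nontrivial_iff.mpr hne
  have hg_exact := LinearMap.exact_map_mkQ_range g
  have hg_mkQ := (LinearMap.range g).mkQ_surjective
  have := isAtomic_of_orderBot_wellFounded_lt (α := Submodule A (I ⧸ LinearMap.range g))
    wellFounded_lt
  obtain ⟨T', hT'⟩ := IsAtomic.exists_atom (Submodule A (I ⧸ LinearMap.range g))
  have := isSimpleModule_iff_isAtom.mpr hT'
  have hUT : HasUniserialExtension A U T :=
    (hA.uniserial_of_isProjectiveCover hc).hasUniserialExtension (Submodule.injective_subtype _)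
      hc.surjective c.exact_subtype_ker_map ha (b := LinearMap.id) Function.injective_id
  have hUT' : HasUniserialExtension A U T' :=
    hI.hasUniserialExtension hg hg_mkQ hg_exact (a := a ∘ₗ δ) (ha.comp hδ) T'.injective_subtype
  obtain ⟨E, f, _, hf⟩ := exists_isInjectiveEnvelope (A := A) U R
  have := hf.module_injective
  obtain ⟨ε⟩ := hUT.nonempty_linearEquiv_right hUT' (hA.uniserial_of_isInjectiveEnvelope hf)
    hf.injective
  obtain ⟨N, i, p, hN, hi, hp, hip⟩ := hI.exists_exact_of_injective hg hg_mkQ hg_exact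
    (b := T'.subtype ∘ₗ ε.toLinearMap) (T'.injective_subtype.comp ε.injective)
  obtain ⟨k, hk⟩ := hN.exists_surjective_ker hi hp hip hc.surjective
  have hδk : Function.Injective (δ ∘ₗ k) :=
    IsNoetherian.injective_of_surjective_endomorphism _ (hδ.comp hk)
  exact hδ' (Function.Injective.of_comp_right hδk hk)

theorem IsNakayama.injective_of_not_surjective (R : Type) [CommRing R] [IsArtinianRing R]
    [Algebra R A] [Module.Finite R A] (hA : IsNakayama A) [Module.Finite A P] [Module.Finite A I]
    [IsSimpleModule A T] {c : T →ₗ[A] I} (hc : IsInjectiveEnvelope c) (hP : Uniserial A P)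
    {g : P →ₗ[A] J} (hg : Function.Surjective g) {δ : (I ⧸ LinearMap.range c) →ₗ[A] J}
    (hδ : Function.Injective δ) (hδ' : ¬ Function.Surjective δ) {U : Type} [AddCommGroup U]
    [Module A U] [IsSimpleModule A U] {b : U →ₗ[A] I ⧸ LinearMap.range c}
    (hb : Function.Injective b) : Function.Injective g := by
  have : IsArtinianRing A := IsArtinianRing.of_finite R A
  have := IsSimpleModule.nontrivial A T
  have := IsSimpleModule.nontrivial A U
  have := hc.module_injective
  rw [← LinearMap.ker_eq_bot]
  by_contra hne
  have := Submodule.nontrivial_iff_ne_bot.mpr hne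
  have hg_ker := (LinearMap.ker g).injective_subtype
  have hg_exact := g.exact_subtype_ker_map
  obtain ⟨D, hD⟩ := IsCoatomic.exists_coatom (Submodule A (LinearMap.ker g))
  have := isSimpleModule_iff_isCoatom.mpr hD
  have hTU : HasUniserialExtension A T U :=
    (hA.uniserial_of_isInjectiveEnvelope hc).hasUniserialExtension hc.injective
      (Submodule.mkQ_surjective _) (LinearMap.exact_map_mkQ_range c) (a := LinearMap.id)
      Function.surjective_id hb
  have hDU : HasUniserialExtension A (LinearMap.ker g ⧸ D) U :=
    hP.hasUniserialExtension hg_ker hg hg_exact D.mkQ_surjective (b := δ ∘ₗ b) (hδ.comp hb)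
  obtain ⟨Q, f, _, hf⟩ := exists_isProjectiveCover (A := A) U
  have := hf.projective
  obtain ⟨ε⟩ := hDU.nonempty_linearEquiv_left hTU (hA.uniserial_of_isProjectiveCover hf)
    hf.surjective
  obtain ⟨N, i, p, hN, hi, hp, hip⟩ := hP.exists_exact_of_surjective hg_ker hg hg_exact
    (a := ε.toLinearMap ∘ₗ D.mkQ) (ε.surjective.comp D.mkQ_surjective)
  obtain ⟨k, hk⟩ := hN.exists_injective_quotient_range hi hp hip hc.injective
  have hkδ : Function.Surjective (k ∘ₗ δ) :=
    IsArtinian.surjective_of_injective_endomorphism _ (hk.comp hδ)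
  exact hδ' (Function.Surjective.of_comp_left hkδ hk)

end SimpleSubquotient

section TranslateRelations

variable {A : Type} [Ring A] {S S' T T' : ModuleCat.{0} A}

variable (A) in
/-- `T` is `ψ S`, the inverse Auslander-Reiten translate of the top of the injective envelope `I`
of `S`, and `I` has finite projective dimension. As `I` is uniserial, an embedding of `S` into `I`
is automatically essential. -/
def PsiRel (S T : ModuleCat.{0} A) : Prop :=
  ∃ I U : ModuleCat.{0} A, Module.Finite A I ∧ Module.Injective A I ∧ Uniserial A I ∧
    HasFiniteProjDim A I ∧ IsSimpleModule A U ∧ (∃ i : S →ₗ[A] I, Function.Injective i) ∧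
      (∃ q : I →ₗ[A] U, Function.Surjective q) ∧ HasUniserialExtension A U T

variable (A) in
/-- `T` is `γ S`, the Auslander-Reiten translate of the socle of the projective cover `P` of `S`,
and `P` has finite injective dimension. As `P` is uniserial, a surjection of `P` onto `S` is
automatically superfluous. -/
def GammaRel (S T : ModuleCat.{0} A) : Prop :=
  ∃ P U : ModuleCat.{0} A, Module.Finite A P ∧ Module.Projective A P ∧ Uniserial A P ∧
    HasFiniteInjDim A P ∧ IsSimpleModule A U ∧ (∃ p : P →ₗ[A] S, Function.Surjective p) ∧
      (∃ i : U →ₗ[A] P, Function.Injective i) ∧ HasUniserialExtension A T U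

theorem PsiRel.of_linearEquiv (h : PsiRel A S T) (e : S' ≃ₗ[A] S) : PsiRel A S' T := by
  obtain ⟨I, U, hfin, hinj, hI, hpd, hU, ⟨i, hi⟩, hq, hUT⟩ := h
  exact ⟨I, U, hfin, hinj, hI, hpd, hU, ⟨i ∘ₗ e, hi.comp e.injective⟩, hq, hUT⟩

theorem GammaRel.of_linearEquiv (h : GammaRel A S T) (e : S ≃ₗ[A] S') : GammaRel A S' T := by
  obtain ⟨P, U, hfin, hproj, hP, hid, hU, ⟨p, hp⟩, hi, hTU⟩ := h
  exact ⟨P, U, hfin, hproj, hP, hid, hU, ⟨e.toLinearMap ∘ₗ p, e.surjective.comp hp⟩, hi, hTU⟩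

theorem PsiRel.nonempty_linearEquiv (R : Type) [CommRing R] [IsArtinianRing R] [Algebra R A]
    [Module.Finite R A] (hA : IsNakayama A) [IsSimpleModule A S] [IsSimpleModule A T]
    [IsSimpleModule A T'] (h : PsiRel A S T) (h' : PsiRel A S T') : Nonempty (T ≃ₗ[A] T') := by
  obtain ⟨I, U, -, _, hI, -, _, ⟨i, hi⟩, ⟨q, hq⟩, hUT⟩ := h
  obtain ⟨I', U', -, _, hI', -, _, ⟨i', hi'⟩, ⟨q', hq'⟩, E, j, p, hE, hj, hp, hjp⟩ := h'
  have := IsSimpleModule.nontrivial A S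
  have := IsSimpleModule.nontrivial A U
  obtain ⟨k, -, hk⟩ := hI.exists_extend_injective hi hi'
  obtain ⟨r, hr⟩ := Module.Injective.out k hk LinearMap.id
  have hr : Function.Surjective r := fun x => ⟨k x, hr x⟩
  obtain ⟨ε⟩ := hI'.nonempty_linearEquiv_of_surjective hq' (g := q ∘ₗ r) (hq.comp hr)
  have hUT' : HasUniserialExtension A U T' :=
    hE.hasUniserialExtension hj hp hjp ε.surjective (b := LinearMap.id) Function.injective_id
  obtain ⟨E', f, _, hf⟩ := exists_isInjectiveEnvelope (A := A) U R
  have := hf.module_injective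
  exact hUT.nonempty_linearEquiv_right hUT' (hA.uniserial_of_isInjectiveEnvelope hf) hf.injective

theorem GammaRel.nonempty_linearEquiv [IsArtinianRing A] (hA : IsNakayama A) [IsSimpleModule A S]
    [IsSimpleModule A T] [IsSimpleModule A T'] (h : GammaRel A S T) (h' : GammaRel A S T') :
    Nonempty (T ≃ₗ[A] T') := by
  obtain ⟨P, U, -, _, hP, -, _, ⟨p, hp⟩, ⟨i, hi⟩, hTU⟩ := h
  obtain ⟨P', U', -, _, hP', -, _, ⟨p', hp'⟩, ⟨i', hi'⟩, E, j, q, hE, hj, hq, hjq⟩ := h'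
  have := IsSimpleModule.nontrivial A S
  have := IsSimpleModule.nontrivial A U
  obtain ⟨k, hk⟩ := Module.projective_lifting_property p p' hp
  have hk : Function.Surjective k := hP.surjective_of_comp (hk ▸ hp')
  obtain ⟨s, hs⟩ := Module.projective_lifting_property k LinearMap.id hk
  have hs : Function.Injective s := Function.LeftInverse.injective (LinearMap.congr_fun hs)
  obtain ⟨ε⟩ := hP'.nonempty_linearEquiv_of_injective (f := s ∘ₗ i) (hs.comp hi) hi'
  have hTU' : HasUniserialExtension A T' U :=
    hE.hasUniserialExtension hj hq hjq (a := LinearMap.id) Function.surjective_id ε.injective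
  obtain ⟨Q, f, _, hf⟩ := exists_isProjectiveCover (A := A) U
  have := hf.projective
  exact hTU.nonempty_linearEquiv_left hTU' (hA.uniserial_of_isProjectiveCover hf) hf.surjective

theorem IsNakayama.exists_psiRel (R : Type) [CommRing R] [IsArtinianRing R] [Algebra R A]
    [Module.Finite R A] (hA : IsNakayama A) [IsSimpleModule A T] (hT : ¬ HasFiniteProjDim A T) :
    ∃ S : ModuleCat.{0} A, IsSimpleModule A S ∧ ¬ HasFiniteProjDim A S ∧ PsiRel A S T := by
  have : IsArtinianRing A := IsArtinianRing.of_finite R A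
  obtain ⟨P, c, _, hc⟩ := exists_isProjectiveCover (A := A) T
  have := hc.projective
  have hP := hA.uniserial_of_isProjectiveCover hc
  have hker : ¬ HasFiniteProjDim A (LinearMap.ker c) := fun hfin =>
    hT (hasFiniteProjDim_right (Submodule.injective_subtype _) hc.surjective
      c.exact_subtype_ker_map hfin hasFiniteProjDim_of_projective)
  obtain ⟨J, δ, hJ, hJpd, hδ, S, hSδ, _, hSpd⟩ := hA.exists_surjective_of_not_hasFiniteProjDim
    (hP.of_injective (Submodule.injective_subtype _)) hker
  have := IsSimpleModule.nontrivial A S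
  have hδ' : ¬ Function.Injective δ := fun hinj => by
    rw [← LinearMap.ker_eq_bot] at hinj
    rw [hinj, le_bot_iff] at hSδ
    exact Submodule.nontrivial_iff_ne_bot.mp this hSδ
  have := nontrivial_of_not_hasFiniteProjDim hker
  obtain ⟨D, hD⟩ := IsCoatomic.exists_coatom (Submodule A (LinearMap.ker c))
  have := isSimpleModule_iff_isCoatom.mpr hD
  obtain ⟨I, f, _, hf⟩ := exists_isInjectiveEnvelope (A := A) S R
  have := hf.module_injective
  have hI := hA.uniserial_of_isInjectiveEnvelope hf
  obtain ⟨g, -, hg⟩ := hJ.exists_extend_injective S.injective_subtype hf.injective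
  have hg' : Function.Surjective g :=
    hA.surjective_of_not_injective R hc hI hg hδ hδ' D.mkQ_surjective
  let ε := LinearEquiv.ofBijective g ⟨hg, hg'⟩
  have hDT : HasUniserialExtension A (LinearMap.ker c ⧸ D) T :=
    hP.hasUniserialExtension (Submodule.injective_subtype _) hc.surjective
      c.exact_subtype_ker_map D.mkQ_surjective (b := LinearMap.id) Function.injective_id
  exact ⟨ModuleCat.of A S, inferInstance, hSpd, I, ModuleCat.of A (LinearMap.ker c ⧸ D), ‹_›, ‹_›,
    hI, hJpd.of_linearEquiv ε.symm, ‹_›, ⟨f, hf.injective⟩,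
    ⟨D.mkQ ∘ₗ δ ∘ₗ ε.symm, D.mkQ_surjective.comp (hδ.comp ε.symm.surjective)⟩, hDT⟩

theorem IsNakayama.exists_gammaRel (R : Type) [CommRing R] [IsArtinianRing R] [Algebra R A]
    [Module.Finite R A] (hA : IsNakayama A) [IsSimpleModule A T] (hT : ¬ HasFiniteInjDim A T) :
    ∃ S : ModuleCat.{0} A, IsSimpleModule A S ∧ ¬ HasFiniteInjDim A S ∧ GammaRel A S T := by
  have : IsArtinianRing A := IsArtinianRing.of_finite R A
  obtain ⟨I, c, _, hc⟩ := exists_isInjectiveEnvelope (A := A) T R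
  have := hc.module_injective
  have hI := hA.uniserial_of_isInjectiveEnvelope hc
  have hquot : ¬ HasFiniteInjDim A (I ⧸ LinearMap.range c) := fun hfin =>
    hT (hasFiniteInjDim_left hc.injective (Submodule.mkQ_surjective _)
      (LinearMap.exact_map_mkQ_range c) hasFiniteInjDim_of_injective hfin)
  obtain ⟨J, δ, hJ, hJid, hδ, D, hDδ, _, hDid⟩ := hA.exists_injective_of_not_hasFiniteInjDim R
    (hI.of_surjective (Submodule.mkQ_surjective _)) hquot
  have := IsSimpleModule.nontrivial A (J ⧸ D)
  have hδ' : ¬ Function.Surjective δ := fun hsurj => by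
    rw [← LinearMap.range_eq_top] at hsurj
    rw [hsurj, ge_iff_le, top_le_iff] at hDδ
    exact Submodule.Quotient.nontrivial_iff.mp this hDδ
  have := nontrivial_of_not_hasFiniteInjDim hquot
  have := isAtomic_of_orderBot_wellFounded_lt (α := Submodule A (I ⧸ LinearMap.range c))
    wellFounded_lt
  obtain ⟨U, hU⟩ := IsAtomic.exists_atom (Submodule A (I ⧸ LinearMap.range c))
  have := isSimpleModule_iff_isAtom.mpr hU
  obtain ⟨P, f, _, hf⟩ := exists_isProjectiveCover (A := A) (J ⧸ D)
  have := hf.projective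
  have hP := hA.uniserial_of_isProjectiveCover hf
  obtain ⟨g, hg⟩ := Module.projective_lifting_property D.mkQ f D.mkQ_surjective
  have hg : Function.Surjective g := hJ.surjective_of_comp (hg ▸ hf.surjective)
  have hg' : Function.Injective g :=
    hA.injective_of_not_surjective R hc hP hg hδ hδ' U.injective_subtype
  let ε := LinearEquiv.ofBijective g ⟨hg', hg⟩
  have hTU : HasUniserialExtension A T U :=
    hI.hasUniserialExtension hc.injective (Submodule.mkQ_surjective _)
      (LinearMap.exact_map_mkQ_range c) (a := LinearMap.id) Function.surjective_id
      U.injective_subtype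
  exact ⟨ModuleCat.of A (J ⧸ D), ‹_›, hDid, P, ModuleCat.of A U, ‹_›, ‹_›, hP,
    hJid.of_linearEquiv ε, ‹_›, ⟨f, hf.surjective⟩,
    ⟨ε.symm.toLinearMap ∘ₗ δ ∘ₗ U.subtype,
      ε.symm.injective.comp (hδ.comp U.injective_subtype)⟩, hTU⟩

end TranslateRelations

section Pigeonhole

variable {A : Type} [Ring A]

theorem exists_right_of_forall_exists_left [IsArtinianRing A] {Q : ModuleCat.{0} A → Prop}
    {r : ModuleCat.{0} A → ModuleCat.{0} A → Prop}
    (hQ : ∀ {S T : ModuleCat.{0} A}, (S ≃ₗ[A] T) → Q S → Q T)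
    (hr : ∀ {S S' T : ModuleCat.{0} A}, (S ≃ₗ[A] S') → r S T → r S' T)
    (hex : ∀ T : ModuleCat.{0} A, IsSimpleModule A T → Q T →
      ∃ S : ModuleCat.{0} A, IsSimpleModule A S ∧ Q S ∧ r S T)
    (huniq : ∀ S T T' : ModuleCat.{0} A, IsSimpleModule A S → IsSimpleModule A T →
      IsSimpleModule A T' → r S T → r S T' → Nonempty (T ≃ₗ[A] T'))
    {S : ModuleCat.{0} A} (hS : IsSimpleModule A S) (hSQ : Q S) :
    ∃ T, r S T := by
  obtain ⟨ι, _, M, hM, hrep⟩ := exists_simple_representatives A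
  have hpre (i : {i // Q (M i)}) : ∃ j : {i // Q (M i)}, r (M j) (M i) := by
    obtain ⟨T, hT, hTQ, hTr⟩ := hex (M i) (hM i) i.2
    obtain ⟨j, ⟨e⟩, -⟩ := hrep T hT
    exact ⟨⟨j, hQ e hTQ⟩, hr e hTr⟩
  choose φ hφ using hpre
  have hinj : Function.Injective φ := fun i i' hii => by
    have he : Nonempty (M i ≃ₗ[A] M i') :=
      huniq (M (φ i)) _ _ (hM _) (hM _) (hM _) (hφ i) (hii ▸ hφ i')
    exact Subtype.ext ((hrep (M i) (hM i)).unique ⟨.refl A _⟩ he)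
  obtain ⟨j, ⟨e⟩, -⟩ := hrep S hS
  obtain ⟨i, hi⟩ := Finite.injective_iff_surjective.mp hinj ⟨j, hQ e hSQ⟩
  have hji : r (M j) (M i) := by simpa only [hi] using hφ i
  exact ⟨M i, hr e.symm hji⟩

end Pigeonhole

section EnvelopesAndCovers

variable {A : Type} [Ring A] {S I P : ModuleCat.{0} A}

theorem IsNakayama.hasFiniteProjDim_of_isInjectiveEnvelope (R : Type) [CommRing R]
    [IsArtinianRing R] [Algebra R A] [Module.Finite R A] (hA : IsNakayama A) [IsSimpleModule A S]
    (hS : ¬ HasFiniteProjDim A S) {f : S →ₗ[A] I} (hf : IsInjectiveEnvelope f) :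
    Module.Finite A I ∧ HasFiniteProjDim A I := by
  have : IsArtinianRing A := IsArtinianRing.of_finite R A
  obtain ⟨T, I', U, hfin, _, -, hpd, -, ⟨i, hi⟩, -⟩ : ∃ T, PsiRel A S T :=
    exists_right_of_forall_exists_left (Q := fun M => ¬ HasFiniteProjDim A M)
      (fun e h h' => h (h'.of_linearEquiv e)) (fun e h => h.of_linearEquiv e.symm)
      (fun _ _ hT => hA.exists_psiRel R hT)
      (fun _ _ _ _ _ _ h h' => h.nonempty_linearEquiv R hA h') ‹_› hS
  have := hf.module_injective
  obtain ⟨g, hg⟩ := Module.Injective.out f hf.injective i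
  have hg : Function.Injective g := by
    refine LinearMap.ker_eq_bot.mp (hf.eq_bot _ ?_)
    rw [← LinearMap.ker_comp, LinearMap.ext hg (f := g ∘ₗ f), LinearMap.ker_eq_bot.mpr hi]
  obtain ⟨r, hr⟩ := Module.Injective.out g hg LinearMap.id
  exact ⟨Module.Finite.of_surjective r fun x => ⟨g x, hr x⟩, hpd.of_retract (LinearMap.ext hr)⟩

theorem IsNakayama.hasFiniteInjDim_of_isProjectiveCover (R : Type) [CommRing R]
    [IsArtinianRing R] [Algebra R A] [Module.Finite R A] (hA : IsNakayama A) [IsSimpleModule A S]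
    (hS : ¬ HasFiniteInjDim A S) {f : P →ₗ[A] S} (hf : IsProjectiveCover f) :
    Module.Finite A P ∧ HasFiniteInjDim A P := by
  have : IsArtinianRing A := IsArtinianRing.of_finite R A
  obtain ⟨T, P', U, hfin, _, -, hid, -, ⟨p, hp⟩, -⟩ : ∃ T, GammaRel A S T :=
    exists_right_of_forall_exists_left (Q := fun M => ¬ HasFiniteInjDim A M)
      (fun e h h' => h (h'.of_linearEquiv e)) (fun e h => h.of_linearEquiv e)
      (fun _ _ hT => hA.exists_gammaRel R hT)
      (fun _ _ _ _ _ _ h h' => h.nonempty_linearEquiv hA h') ‹_› hS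
  have := hf.projective
  obtain ⟨g, hg⟩ := Module.projective_lifting_property f p hf.surjective
  have hg : Function.Surjective g := by
    refine LinearMap.range_eq_top.mp (hf.eq_top _ ?_)
    rw [← LinearMap.range_comp, hg, LinearMap.range_eq_top.mpr hp]
  obtain ⟨s, hs⟩ := Module.projective_lifting_property g LinearMap.id hg
  exact ⟨Module.Finite.of_surjective g hg, hid.of_retract hs⟩

end EnvelopesAndCovers

section FinitisticBounds

variable {A : Type} [Ring A]

variable (A) in
/-- The number `d`: the supremum over the simple modules `S` of `pd S` if it is finite, and of the
projective dimension of the injective envelope of `S` otherwise. -/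
def simpleProjBound : ℕ∞ :=
  sSup {x : ℕ∞ | ∃ S M : ModuleCat.{0} A, IsSimpleModule A S ∧
    ((projDim A S ≠ ⊤ ∧ M = S) ∨ (projDim A S = ⊤ ∧ IsInjEnvOf A S M)) ∧ x = projDim A M}

variable (A) in
/-- The number `d'`: the supremum over the simple modules `S` of `id S` if it is finite, and of the
injective dimension of the projective cover of `S` otherwise. -/
def simpleInjBound : ℕ∞ :=
  sSup {x : ℕ∞ | ∃ S N : ModuleCat.{0} A, IsSimpleModule A S ∧
    ((injDim A S ≠ ⊤ ∧ N = S) ∨ (injDim A S = ⊤ ∧ IsProjCoverOf A S N)) ∧ x = injDim A N}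

theorem delAlg_le_simpleProjBound (R : Type) [CommRing R] [IsArtinianRing R] [Algebra R A]
    [Module.Finite R A] :
    delAlg A ≤ simpleProjBound A := by
  have : IsArtinianRing A := IsArtinianRing.of_finite R A
  refine sSup_le ?_
  rintro _ ⟨S, hS, rfl⟩
  by_cases hpd : projDim A S = ⊤
  · obtain ⟨I, f, _, hf⟩ := exists_isInjectiveEnvelope (A := A) S R
    exact (delLevel_le_projDim hf.injective).trans (le_sSup ⟨S, I, hS,
      .inr ⟨hpd, ModuleCat.ofHom f, (isInjectiveEnvelopeHom_iff _).mpr hf⟩, rfl⟩)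
  · exact (delLevel_le_projDim (i := LinearMap.id) Function.injective_id).trans
      (le_sSup ⟨S, S, hS, .inl ⟨hpd, rfl⟩, rfl⟩)

theorem desAlg_le_simpleInjBound (R : Type) [CommRing R] [IsArtinianRing R] [Algebra R A]
    [Module.Finite R A] :
    desAlg A ≤ simpleInjBound A := by
  have : IsArtinianRing A := IsArtinianRing.of_finite R A
  refine sSup_le ?_
  rintro _ ⟨S, hS, rfl⟩
  by_cases hid : injDim A S = ⊤
  · obtain ⟨P, f, _, hf⟩ := exists_isProjectiveCover (A := A) S
    exact (desLevel_le_injDim R hf.surjective).trans (le_sSup ⟨S, P, hS,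
      .inr ⟨hid, ModuleCat.ofHom f, (isProjectiveCoverHom_iff _).mpr hf⟩, rfl⟩)
  · exact (desLevel_le_injDim R (p := LinearMap.id) Function.surjective_id).trans
      (le_sSup ⟨S, S, hS, .inl ⟨hid, rfl⟩, rfl⟩)

theorem IsNakayama.simpleProjBound_le_finProDim (R : Type) [CommRing R]
    [IsArtinianRing R] [Algebra R A] [Module.Finite R A] (hA : IsNakayama A) :
    simpleProjBound A ≤ finProDim A := by
  refine sSup_le ?_
  rintro _ ⟨S, M, hS, ⟨hpd, rfl⟩ | ⟨hpd, f, hf⟩, rfl⟩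
  · exact le_sSup ⟨M, inferInstance, rfl, hpd⟩
  · obtain ⟨hMfin, hMpd⟩ := hA.hasFiniteProjDim_of_isInjectiveEnvelope R
      (mt (projDim_ne_top_iff S).mpr (not_not_intro hpd)) ((isInjectiveEnvelopeHom_iff f).mp hf)
    exact le_sSup ⟨M, hMfin, rfl, (projDim_ne_top_iff M).mpr hMpd⟩

theorem IsNakayama.simpleInjBound_le_finInjDim (R : Type) [CommRing R]
    [IsArtinianRing R] [Algebra R A] [Module.Finite R A] (hA : IsNakayama A) :
    simpleInjBound A ≤ finInjDim A := by
  refine sSup_le ?_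
  rintro _ ⟨S, M, hS, ⟨hid, rfl⟩ | ⟨hid, f, hf⟩, rfl⟩
  · exact le_sSup ⟨M, inferInstance, rfl, hid⟩
  · obtain ⟨hMfin, hMid⟩ := hA.hasFiniteInjDim_of_isProjectiveCover R
      (mt (injDim_ne_top_iff S).mpr (not_not_intro hid)) ((isProjectiveCoverHom_iff f).mp hf)
    exact le_sSup ⟨M, hMfin, rfl, (injDim_ne_top_iff M).mpr hMid⟩

end FinitisticBounds

end ArtinAlg

open ArtinAlg in
/-- Let `A` be a Nakayama algebra. For a simple module `S` let
`M_S = S` if `pd S < ∞` and `M_S = I S` otherwise, and let `N_S = S` if `id S < ∞` and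
`N_S = P S` otherwise; set `d = max_S pd M_S` and `d' = max_S id N_S`. Then
`fin-pro A = fin-inj A = del A = des A = d = d'`. -/
theorem statement_10 (R : Type) [CommRing R] [IsArtinianRing R]
    (A : Type) [Ring A] [Algebra R A] [Module.Finite R A]
    (hNak : IsNakayama A) (d d' : ℕ∞)
    (hd : d = sSup {x : ℕ∞ | ∃ S MS : ModuleCat.{0} A, IsSimpleModule A ↥S ∧
      ((projDim A S ≠ ⊤ ∧ MS = S) ∨ (projDim A S = ⊤ ∧ IsInjEnvOf A S MS)) ∧
      x = projDim A MS})
    (hd' : d' = sSup {x : ℕ∞ | ∃ S NS : ModuleCat.{0} A, IsSimpleModule A ↥S ∧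
      ((injDim A S ≠ ⊤ ∧ NS = S) ∨ (injDim A S = ⊤ ∧ IsProjCoverOf A S NS)) ∧
      x = injDim A NS}) :
    finProDim A = finInjDim A ∧ finInjDim A = delAlg A ∧ delAlg A = desAlg A ∧
      desAlg A = d ∧ d = d' := by
  have : IsArtinianRing A := IsArtinianRing.of_finite R A
  have h₁ : finInjDim A ≤ delAlg A := finInjDim_le_delAlg
  have h₂ : delAlg A ≤ d := hd ▸ delAlg_le_simpleProjBound R
  have h₃ : d ≤ finProDim A := hd ▸ hNak.simpleProjBound_le_finProDim R
  have h₄ : finProDim A ≤ desAlg A := finProDim_le_desAlg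
  have h₅ : desAlg A ≤ d' := hd' ▸ desAlg_le_simpleInjBound R
  have h₆ : d' ≤ finInjDim A := hd' ▸ hNak.simpleInjBound_le_finInjDim R
  have hfin : finProDim A = finInjDim A :=
    (h₄.trans (h₅.trans h₆)).antisymm (h₁.trans (h₂.trans h₃))
  have hdel : finInjDim A = delAlg A := h₁.antisymm (h₂.trans (h₃.trans hfin.le))
  have hdes : finProDim A = desAlg A := h₄.antisymm (h₅.trans (h₆.trans hfin.ge))
  have hd_eq : finProDim A = d := (hfin.trans hdel).le.trans h₂ |>.antisymm h₃
  have hd'_eq : finProDim A = d' := (hdes.le.trans h₅).antisymm (h₆.trans hfin.ge)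
  exact ⟨hfin, hdel, (hfin.trans hdel).symm.trans hdes, hdes.symm.trans hd_eq,
    hd_eq.symm.trans hd'_eq⟩
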